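/- arXiv:2503.13201 — 2 statements merged into one kernel-verified Lean document; each statement's English description precedes it below -/
import Mathlib

section
/- There exist a₀ > 0 and C > 0 such that for every a ∈ (0,a₀) there are a real number c(a) and a smooth, doubly 2π-periodic, symmetric function φ_a : ℝ² → ℝ satisfying −Δφ_a + c(a)φ_a = φ_a² on ℝ², such that for all (x,y) ∈ ℝ²: |φ_a(x,y) − [2 + a cos x cos y + (a²/8)(−7/6 + cos 2x + cos 2y + (1/3)cos 2x cos 2y) + (a³/384)(7(cos 3x cos y + cos x cos 3y) + (1/2)cos 3x cos 3y)]| ≤ C a⁴, and moreover |c(a) − (2 − a²/48)| ≤ C a⁴. -/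
/-!
Writing `φ = c + a ψ` turns the standing-wave equation into `-Δψ = c ψ + a ψ²`, which bifurcates
from `ψ = cos x cos y` at `c = 2`. Put `ψ = cos x cos y + v` with `v` free of the mode
`cos x cos y`, and let `κ` be the coefficient of that mode in `ψ²`. Projecting on the mode gives
`c = 2 - a κ`; on the other modes `-Δ - 2` has eigenvalues `m² + n² - 2 ∈ ℤ \ {0}`, hence a bounded
inverse `T`, and the equation becomes `v = a T (ψ² - κ v)` (`equation_of_fixed`). The right-hand side
is `a` times a polynomial map `G`, so for small `a` it is a contraction near `0` (`exists_fixed`).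

The Banach space is `ℓ¹(ℕ × ℕ)`, a sequence `u` standing for
`∑ u (m, n) 2^{-(m+n)} cos (m x) cos (n y)`. Evenness and periodicity are built in, the weight gives
smoothness and termwise differentiation (`smooth_ev`, `lap_ev`), and the addition formulas make
the space a Banach algebra under multiplication of functions (`ev_mulE`, `norm_mulE_le`). Bounded
linear maps out of it are determined by arbitrary bounded families on the basis (`lift`, `ext_b`).

Substituting `v = O(a)` into the fixed-point equation twice gives `v = a V1 + a² V2 + O(a³)` with
`V1 = T (C0²)`, `V2 = 2 T (C0 V1)`, where `C0 = cos x cos y`, and `κ = a / 48 + O(a³)`: the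
`a²`-term of `κ` vanishes because the products `C0 V2` and `V1 V1` have no `cos x cos y` component
(`expansion`).
-/

noncomputable section
open Real MeasureTheory Filter

/-- doubly 2π-periodic -/
def DblPeriodic (u : ℝ → ℝ → ℝ) : Prop :=
  ∀ x y : ℝ, u (x + 2*π) y = u x y ∧ u x (y + 2*π) = u x y

/-- symmetric: even in each variable separately -/
def SymFun (u : ℝ → ℝ → ℝ) : Prop :=
  ∀ x y : ℝ, u (-x) y = u x y ∧ u x (-y) = u x y

/-- smooth as a function on ℝ² -/
def Smooth2 (u : ℝ → ℝ → ℝ) : Prop :=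
  ContDiff ℝ (⊤ : ℕ∞) fun p : ℝ × ℝ => u p.1 p.2

/-- the Laplacian Δu = u_xx + u_yy -/
def lap (u : ℝ → ℝ → ℝ) (x y : ℝ) : ℝ :=
  deriv (fun t => deriv (fun s => u s y) t) x + deriv (fun t => deriv (fun s => u x s) t) y

namespace StokesWave

/-! ### The space of weighted cosine coefficients -/

/-- The Banach space `ℓ¹(ℕ × ℕ)` of coefficient sequences. A sequence `u` stands for the function
`∑ u (m, n) 2^{-(m+n)} cos (m x) cos (n y)`; the geometric weight makes all these functions
analytic. -/
abbrev E : Type := lp (fun _ : ℕ × ℕ => ℝ) 1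

/-- The basis vector of index `p`. -/
def b (p : ℕ × ℕ) : E := lp.single 1 p 1

lemma norm_b (p : ℕ × ℕ) : ‖b p‖ = 1 := by
  simp [b, lp.norm_single]

lemma hasSum_norm (u : E) : HasSum (fun p => |u p|) ‖u‖ := by
  simpa using lp.hasSum_norm (p := 1) (by simp) u

section lift

variable {F : Type*} [NormedAddCommGroup F] [NormedSpace ℝ F]

lemma summable_smul [CompleteSpace F] {M : ℕ × ℕ → F} {K : ℝ} (hM : ∀ p, ‖M p‖ ≤ K) (u : E) :
    Summable fun p => u p • M p := by
  refine Summable.of_norm_bounded ((hasSum_norm u).summable.mul_right K) fun p => ?_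
  rw [norm_smul, Real.norm_eq_abs]
  exact mul_le_mul_of_nonneg_left (hM p) (abs_nonneg _)

/-- The universal property of `ℓ¹`: a bounded family `M` in a Banach space extends to the
continuous linear map `b p ↦ M p`. -/
def lift [CompleteSpace F] (M : ℕ × ℕ → F) (K : ℝ) (hM : ∀ p, ‖M p‖ ≤ K) : E →L[ℝ] F :=
  LinearMap.mkContinuous
    { toFun := fun u => ∑' p, u p • M p
      map_add' := fun u v => by
        rw [← (summable_smul hM u).tsum_add (summable_smul hM v)]
        simp [add_smul]
      map_smul' := fun c u => by
        rw [RingHom.id_apply, ← (summable_smul hM u).tsum_const_smul]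
        simp [mul_smul] }
    K fun u => by
      have h := (hasSum_norm u).mul_left K
      refine tsum_of_norm_bounded h fun p => ?_
      rw [norm_smul, Real.norm_eq_abs, mul_comm]
      exact mul_le_mul_of_nonneg_right (hM p) (abs_nonneg _)

lemma lift_apply [CompleteSpace F] (M : ℕ × ℕ → F) (K : ℝ) (hM : ∀ p, ‖M p‖ ≤ K) (u : E) :
    lift M K hM u = ∑' p, u p • M p := rfl

lemma norm_lift_apply_le [CompleteSpace F] (M : ℕ × ℕ → F) (K : ℝ) (hM : ∀ p, ‖M p‖ ≤ K) (u : E) :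
    ‖lift M K hM u‖ ≤ K * ‖u‖ := by
  have h := (hasSum_norm u).mul_left K
  refine tsum_of_norm_bounded h fun p => ?_
  rw [norm_smul, Real.norm_eq_abs, mul_comm]
  exact mul_le_mul_of_nonneg_right (hM p) (abs_nonneg _)

@[simp] lemma lift_b [CompleteSpace F] (M : ℕ × ℕ → F) (K : ℝ) (hM : ∀ p, ‖M p‖ ≤ K)
    (p : ℕ × ℕ) : lift M K hM (b p) = M p := by
  rw [lift_apply, tsum_eq_single p]
  · simp [b]
  · intro q hq
    simp [b, hq]

lemma ext_b {f g : E →L[ℝ] F} (h : ∀ p, f (b p) = g (b p)) : f = g := by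
  refine lp.ext_continuousLinearMap (by simp) fun p => ?_
  ext
  simpa [b] using h p

end lift

/-! ### Multiplication -/

/-- `|m - n|` in `ℕ`. -/
def dst (m n : ℕ) : ℕ := (m - n) + (n - m)

/-- The product of two basis vectors, from `cos α cos β = (cos (α + β) + cos (α - β)) / 2` in each
variable. Since `m + n - |m - n| = 2 min m n`, the weights contribute powers of `1 / 4`. -/
def mulBasis (p q : ℕ × ℕ) : E :=
  (1 / 4 : ℝ) • b (p.1 + q.1, p.2 + q.2)
    + ((1 / 4 : ℝ) * (1 / 4) ^ min p.2 q.2) • b (p.1 + q.1, dst p.2 q.2)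
    + ((1 / 4 : ℝ) * (1 / 4) ^ min p.1 q.1) • b (dst p.1 q.1, p.2 + q.2)
    + ((1 / 4 : ℝ) * (1 / 4) ^ min p.1 q.1 * (1 / 4) ^ min p.2 q.2) •
      b (dst p.1 q.1, dst p.2 q.2)

lemma norm_mulBasis_le (p q : ℕ × ℕ) : ‖mulBasis p q‖ ≤ 1 := by
  have h1 : ((1 / 4 : ℝ)) ^ min p.1 q.1 ≤ 1 := pow_le_one₀ (by norm_num) (by norm_num)
  have h2 : ((1 / 4 : ℝ)) ^ min p.2 q.2 ≤ 1 := pow_le_one₀ (by norm_num) (by norm_num)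
  have h1' : 0 ≤ ((1 / 4 : ℝ)) ^ min p.1 q.1 := by positivity
  have h2' : 0 ≤ ((1 / 4 : ℝ)) ^ min p.2 q.2 := by positivity
  unfold mulBasis
  refine (norm_add_le _ _).trans ?_
  have h12 : (1 / 4 : ℝ) ^ min p.1 q.1 * (1 / 4) ^ min p.2 q.2 ≤ 1 := mul_le_one₀ h1 h2' h2
  have h3 := norm_add₃_le (a := (1 / 4 : ℝ) • b (p.1 + q.1, p.2 + q.2))
    (b := ((1 / 4 : ℝ) * (1 / 4) ^ min p.2 q.2) • b (p.1 + q.1, dst p.2 q.2))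
    (c := ((1 / 4 : ℝ) * (1 / 4) ^ min p.1 q.1) • b (dst p.1 q.1, p.2 + q.2))
  simp only [norm_smul, norm_b, mul_one] at h3 ⊢
  rw [Real.norm_of_nonneg (by positivity)] at h3 ⊢
  rw [Real.norm_of_nonneg (by positivity), Real.norm_of_nonneg (by positivity)] at h3
  linarith

/-- Multiplication of functions, transported to coefficients. -/
def mulE : E →L[ℝ] E →L[ℝ] E :=
  lift (fun p => lift (mulBasis p) 1 (norm_mulBasis_le p)) 1 fun _ =>
    ContinuousLinearMap.opNorm_le_bound _ zero_le_one fun u => norm_lift_apply_le _ _ _ u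

@[simp] lemma mulE_b (p q : ℕ × ℕ) : mulE (b p) (b q) = mulBasis p q := by
  simp [mulE]

lemma norm_mulE_le (u v : E) : ‖mulE u v‖ ≤ ‖u‖ * ‖v‖ := by
  refine (ContinuousLinearMap.le_opNorm _ _).trans
    (mul_le_mul_of_nonneg_right ?_ (norm_nonneg _))
  simpa [mulE] using norm_lift_apply_le (fun p => lift (mulBasis p) 1 (norm_mulBasis_le p)) 1 (_) u

lemma mulE_comm (u v : E) : mulE u v = mulE v u := by
  have h1 : ∀ p, mulE (b p) = mulE.flip (b p) := fun p => ext_b fun q => by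
    simp [mulBasis, add_comm, min_comm, dst]
  have h2 : mulE = mulE.flip := ext_b h1
  conv_lhs => rw [h2]
  rfl

/-! ### Evaluation at a point -/

/-- The function represented by the basis vector of index `p`. -/
def mode (p : ℕ × ℕ) (x y : ℝ) : ℝ :=
  (1 / 2 : ℝ) ^ (p.1 + p.2) * (Real.cos (p.1 * x) * Real.cos (p.2 * y))

lemma norm_mode_le (p : ℕ × ℕ) (x y : ℝ) : ‖mode p x y‖ ≤ 1 := by
  rw [mode, norm_mul, norm_mul, Real.norm_eq_abs, Real.norm_eq_abs, Real.norm_eq_abs]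
  have h : |((1 / 2 : ℝ)) ^ (p.1 + p.2)| ≤ 1 := by
    rw [abs_of_nonneg (by positivity)]
    exact pow_le_one₀ (by norm_num) (by norm_num)
  exact mul_le_one₀ h (by positivity)
    (mul_le_one₀ (Real.abs_cos_le_one _) (abs_nonneg _) (Real.abs_cos_le_one _))

/-- Evaluation at `(x, y)` of the function represented by a coefficient sequence. -/
def ev (x y : ℝ) : E →L[ℝ] ℝ := lift (fun p => mode p x y) 1 fun p => norm_mode_le p x y

@[simp] lemma ev_b (x y : ℝ) (p : ℕ × ℕ) : ev x y (b p) = mode p x y := by simp [ev]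

lemma abs_ev_le (x y : ℝ) (u : E) : |ev x y u| ≤ ‖u‖ := by
  simpa [ev] using norm_lift_apply_le _ 1 (fun p => norm_mode_le p x y) u

lemma cos_mul_cos_nat (m n : ℕ) (x : ℝ) :
    (1 / 2 : ℝ) ^ m * Real.cos (m * x) * ((1 / 2 : ℝ) ^ n * Real.cos (n * x)) =
      (1 / 2) * ((1 / 2 : ℝ) ^ (m + n) * Real.cos ((m + n : ℕ) * x))
        + (1 / 2) * (1 / 4) ^ min m n * ((1 / 2 : ℝ) ^ dst m n * Real.cos (dst m n * x)) := by
  wlog h : n ≤ m generalizing m n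
  · rw [mul_comm, this n m (by omega), add_comm n m, min_comm]
    simp [dst, add_comm]
  obtain ⟨k, rfl⟩ := Nat.exists_eq_add_of_le h
  have e1 : dst (n + k) n = k := by simp [dst]
  have e2 : min (n + k) n = n := by simp
  rw [e1, e2]
  have e3 : ((1 / 4 : ℝ)) ^ n = (1 / 2) ^ n * (1 / 2) ^ n := by
    rw [← mul_pow]; norm_num
  have e4 : Real.cos (((n + k + n : ℕ) : ℝ) * x) =
      Real.cos ((n + k : ℕ) * x) * Real.cos (n * x)
        - Real.sin ((n + k : ℕ) * x) * Real.sin (n * x) := by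
    rw [← Real.cos_add]; push_cast; ring_nf
  have e5 : Real.cos ((k : ℝ) * x) =
      Real.cos ((n + k : ℕ) * x) * Real.cos (n * x)
        + Real.sin ((n + k : ℕ) * x) * Real.sin (n * x) := by
    rw [← Real.cos_sub]; push_cast; ring_nf
  rw [e3, e4, e5]
  ring

lemma ev_mulBasis (x y : ℝ) (p q : ℕ × ℕ) :
    ev x y (mulBasis p q) = mode p x y * mode q x y := by
  have h1 := cos_mul_cos_nat p.1 q.1 x
  have h2 := cos_mul_cos_nat p.2 q.2 y
  have h3 : mode p x y * mode q x y =
      ((1 / 2 : ℝ) ^ p.1 * Real.cos (p.1 * x) * ((1 / 2 : ℝ) ^ q.1 * Real.cos (q.1 * x))) *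
      ((1 / 2 : ℝ) ^ p.2 * Real.cos (p.2 * y) * ((1 / 2 : ℝ) ^ q.2 * Real.cos (q.2 * y))) := by
    simp only [mode, pow_add]; ring
  rw [h3, h1, h2]
  simp only [mulBasis, map_add, map_smul, ev_b, mode, smul_eq_mul]
  simp only [pow_add _ _ (dst p.2 q.2), pow_add _ _ (p.2 + q.2)]
  ring

lemma ev_mulE (x y : ℝ) (u v : E) : ev x y (mulE u v) = ev x y u * ev x y v := by
  have h1 : ∀ p, (ev x y).comp (mulE (b p)) = ev x y (b p) • ev x y := fun p => ext_b fun q => by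
    simp [ev_mulBasis]
  have h2 : (ev x y).comp (mulE.flip v) = ev x y v • ev x y := ext_b fun p => by
    simpa [mul_comm] using congrArg (fun f => f v) (h1 p)
  simpa [mul_comm] using congrArg (fun f => f u) h2

/-! ### Smoothness and the Laplacian -/

lemma exists_pow_mul_le (k : ℕ) : ∃ K : ℝ, ∀ n : ℕ, (n : ℝ) ^ k * (1 / 2 : ℝ) ^ n ≤ K := by
  have h := tendsto_pow_const_mul_const_pow_of_abs_lt_one k (r := (1 / 2 : ℝ))
    (by rw [abs_of_pos] <;> norm_num)
  obtain ⟨K, hK⟩ := h.bddAbove_range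
  exact ⟨K, fun n => hK ⟨n, rfl⟩⟩

lemma norm_iteratedFDeriv_cos_comp_le (L : ℝ × ℝ →L[ℝ] ℝ) (hL : ‖L‖ ≤ 1) (m k : ℕ) (z : ℝ × ℝ) :
    ‖iteratedFDeriv ℝ k (fun z => Real.cos (m * L z)) z‖ ≤ (m : ℝ) ^ k := by
  have h := ContinuousLinearMap.iteratedFDeriv_comp_right ((m : ℝ) • L) (f := Real.cos)
    Real.contDiff_cos z (i := k) (n := (⊤ : ℕ∞)) (mod_cast le_top)
  have e : (Real.cos ∘ ((m : ℝ) • L)) = fun z => Real.cos (m * L z) := by ext; simp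
  rw [← e, h]
  refine (ContinuousMultilinearMap.norm_compContinuousLinearMap_le _ _).trans ?_
  rw [norm_iteratedFDeriv_eq_norm_iteratedDeriv, Finset.prod_const, Finset.card_univ,
    Fintype.card_fin, Real.norm_eq_abs]
  have h2 : ‖(m : ℝ) • L‖ ≤ m := by
    rw [norm_smul]; simpa using mul_le_mul_of_nonneg_left hL (Nat.cast_nonneg (α := ℝ) m)
  calc _ ≤ 1 * (m : ℝ) ^ k := by
        gcongr
        exact Real.abs_iteratedDeriv_cos_le_one _ _
    _ = _ := one_mul _

lemma norm_iteratedFDeriv_mode_le (p : ℕ × ℕ) (k : ℕ) (z : ℝ × ℝ) :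
    ‖iteratedFDeriv ℝ k (fun z : ℝ × ℝ => mode p z.1 z.2) z‖ ≤
      ((p.1 + p.2 : ℕ) : ℝ) ^ k * (1 / 2 : ℝ) ^ (p.1 + p.2) := by
  have c1 : ContDiff ℝ (⊤ : ℕ∞) fun z : ℝ × ℝ => Real.cos (p.1 * z.1) := by fun_prop
  have c2 : ContDiff ℝ (⊤ : ℕ∞) fun z : ℝ × ℝ => Real.cos (p.2 * z.2) := by fun_prop
  have e : (fun z : ℝ × ℝ => mode p z.1 z.2) = fun z => ((1 / 2 : ℝ) ^ (p.1 + p.2)) •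
      (Real.cos (p.1 * z.1) * Real.cos (p.2 * z.2)) := by
    ext; simp [mode]
  rw [e, iteratedFDeriv_const_smul_apply' (((c1.mul c2).of_le (mod_cast le_top)).contDiffAt),
    norm_smul, mul_comm, Real.norm_of_nonneg (by positivity)]
  refine mul_le_mul_of_nonneg_right ?_ (by positivity)
  refine (norm_iteratedFDeriv_mul_le c1 c2 z (n := k) (mod_cast le_top)).trans ?_
  rw [Nat.cast_add, add_pow]
  refine Finset.sum_le_sum fun i _ => ?_
  have h1 := norm_iteratedFDeriv_cos_comp_le (ContinuousLinearMap.fst ℝ ℝ ℝ)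
    (ContinuousLinearMap.norm_fst_le ℝ ℝ ℝ) p.1 i z
  have h2 := norm_iteratedFDeriv_cos_comp_le (ContinuousLinearMap.snd ℝ ℝ ℝ)
    (ContinuousLinearMap.norm_snd_le ℝ ℝ ℝ) p.2 (k - i) z
  simp only [ContinuousLinearMap.coe_fst', ContinuousLinearMap.coe_snd'] at h1 h2
  calc _ ≤ (k.choose i : ℝ) * (p.1 : ℝ) ^ i * (p.2 : ℝ) ^ (k - i) := by gcongr
    _ = _ := by ring

lemma smooth_ev (u : E) : Smooth2 fun x y => ev x y u := by
  unfold Smooth2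
  choose K hK using exists_pow_mul_le
  have e : (fun z : ℝ × ℝ => ev z.1 z.2 u) = fun z : ℝ × ℝ => ∑' p, u p • mode p z.1 z.2 := rfl
  rw [e]
  have c : ∀ p : ℕ × ℕ, ContDiff ℝ (⊤ : ℕ∞) fun z : ℝ × ℝ => mode p z.1 z.2 := fun p => by
    unfold mode; fun_prop
  refine contDiff_tsum (v := fun k p => |u p| * K k) (fun p => (c p).const_smul _)
    (fun k _ => (hasSum_norm u).summable.mul_right _) fun k p z _ => ?_
  rw [iteratedFDeriv_const_smul_apply' ((c p).of_le (mod_cast le_top)).contDiffAt, norm_smul,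
    Real.norm_eq_abs]
  exact mul_le_mul_of_nonneg_left ((norm_iteratedFDeriv_mode_le p k z).trans (hK _ _))
    (abs_nonneg _)

lemma deriv_deriv_tsum_cos {w : ℕ × ℕ → ℝ} {k : ℕ × ℕ → ℕ} (h0 : Summable fun p => |w p|)
    (h2 : Summable fun p => |w p| * (k p : ℝ) ^ 2) (t : ℝ) :
    deriv (fun t => deriv (fun s => ∑' p, w p * Real.cos (k p * s)) t) t =
      ∑' p, -(w p * (k p : ℝ) ^ 2 * Real.cos (k p * t)) := by
  have hk : ∀ p, (k p : ℝ) ≤ (k p : ℝ) ^ 2 := fun p => by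
    exact_mod_cast Nat.le_self_pow two_ne_zero _
  have d1 : ∀ p s, HasDerivAt (fun s => w p * Real.cos (k p * s))
      (w p * (-Real.sin (k p * s) * k p)) s := fun p s => by
    simpa using ((((hasDerivAt_id s).const_mul (k p : ℝ)).cos).const_mul (w p))
  have d2 : ∀ p s, HasDerivAt (fun s => w p * (-Real.sin (k p * s) * k p))
      (-(w p * (k p : ℝ) ^ 2 * Real.cos (k p * s))) s := fun p s => by
    have := ((((((hasDerivAt_id s).const_mul (k p : ℝ)).sin).neg).mul_const
      (k p : ℝ)).const_mul (w p))
    refine this.congr_deriv ?_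
    simp; ring
  have s1 : ∀ p s, ‖w p * (-Real.sin (k p * s) * k p)‖ ≤ |w p| * (k p : ℝ) ^ 2 := fun p s => by
    rw [norm_mul, norm_mul, norm_neg, Real.norm_eq_abs, Real.norm_eq_abs, Real.norm_natCast]
    refine mul_le_mul_of_nonneg_left ?_ (abs_nonneg _)
    nlinarith [hk p, Real.abs_sin_le_one (k p * s), Nat.cast_nonneg (α := ℝ) (k p)]
  have s2 : ∀ p s, ‖-(w p * (k p : ℝ) ^ 2 * Real.cos (k p * s))‖ ≤ |w p| * (k p : ℝ) ^ 2 :=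
    fun p s => by
    rw [norm_neg, norm_mul, norm_mul, norm_pow, Real.norm_natCast, Real.norm_eq_abs]
    exact mul_le_of_le_one_right (by positivity) (Real.abs_cos_le_one _)
  have z0 : Summable fun p => w p * Real.cos (k p * 0) := by
    simpa using h0.of_abs
  have z1 : Summable fun p => w p * (-Real.sin (k p * 0) * k p) := by simp
  have e1 : (fun t => deriv (fun s => ∑' p, w p * Real.cos (k p * s)) t) =
      fun t => ∑' p, w p * (-Real.sin (k p * t) * k p) := by
    ext s
    exact (hasDerivAt_tsum h2 d1 s1 z0 s).deriv
  rw [e1]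
  exact (hasDerivAt_tsum h2 d2 s2 z1 t).deriv

lemma exists_lap_bound : ∃ K : ℝ, ∀ (p : ℕ × ℕ) (x y : ℝ),
    ‖((p.1 : ℝ) ^ 2 + (p.2 : ℝ) ^ 2) * mode p x y‖ ≤ K := by
  obtain ⟨K, hK⟩ := exists_pow_mul_le 2
  refine ⟨K, fun p x y => le_trans ?_ (hK (p.1 + p.2))⟩
  rw [norm_mul, Real.norm_of_nonneg (by positivity)]
  have h : ‖mode p x y‖ ≤ (1 / 2 : ℝ) ^ (p.1 + p.2) := by
    simpa using norm_iteratedFDeriv_mode_le p 0 (x, y)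
  have h' : (p.1 : ℝ) ^ 2 + (p.2 : ℝ) ^ 2 ≤ ((p.1 + p.2 : ℕ) : ℝ) ^ 2 := by
    push_cast
    nlinarith [mul_nonneg (Nat.cast_nonneg (α := ℝ) p.1) (Nat.cast_nonneg (α := ℝ) p.2)]
  gcongr

/-- Evaluation at `(x, y)` of minus the Laplacian of the represented function. -/
def evLap (x y : ℝ) : E →L[ℝ] ℝ :=
  lift (fun p => ((p.1 : ℝ) ^ 2 + (p.2 : ℝ) ^ 2) * mode p x y) exists_lap_bound.choose
    fun p => exists_lap_bound.choose_spec p x y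

@[simp] lemma evLap_b (x y : ℝ) (p : ℕ × ℕ) :
    evLap x y (b p) = ((p.1 : ℝ) ^ 2 + (p.2 : ℝ) ^ 2) * mode p x y := by simp [evLap]

lemma lap_ev (u : E) (x y : ℝ) : lap (fun x y => ev x y u) x y = -evLap x y u := by
  obtain ⟨K, hK⟩ := exists_pow_mul_le 2
  have hw : ∀ (k : ℕ × ℕ → ℕ) (t : ℕ × ℕ → ℝ), (∀ p, k p ≤ p.1 + p.2) → (∀ p, |t p| ≤ 1) →
      Summable fun p => |u p * (1 / 2 : ℝ) ^ (p.1 + p.2) * t p| * (k p : ℝ) ^ 2 := by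
    intro k t hk ht
    refine Summable.of_nonneg_of_le (fun p => by positivity) (fun p => ?_)
      ((hasSum_norm u).summable.mul_right K)
    rw [abs_mul, abs_mul, abs_of_nonneg (a := (1 / 2 : ℝ) ^ (p.1 + p.2)) (by positivity)]
    have h1 : (k p : ℝ) ≤ (p.1 + p.2 : ℕ) := by exact_mod_cast hk p
    calc |u p| * (1 / 2 : ℝ) ^ (p.1 + p.2) * |t p| * (k p : ℝ) ^ 2
        ≤ |u p| * (1 / 2 : ℝ) ^ (p.1 + p.2) * 1 * ((p.1 + p.2 : ℕ) : ℝ) ^ 2 := by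
          gcongr
          exact ht p
      _ = |u p| * (((p.1 + p.2 : ℕ) : ℝ) ^ 2 * (1 / 2 : ℝ) ^ (p.1 + p.2)) := by ring
      _ ≤ |u p| * K := mul_le_mul_of_nonneg_left (hK _) (abs_nonneg _)
  have hw0 : ∀ (t : ℕ × ℕ → ℝ), (∀ p, |t p| ≤ 1) →
      Summable fun p => |u p * (1 / 2 : ℝ) ^ (p.1 + p.2) * t p| := by
    intro t ht
    refine Summable.of_nonneg_of_le (fun p => by positivity) (fun p => ?_)
      (hasSum_norm u).summable
    rw [abs_mul, abs_mul, abs_of_nonneg (a := (1 / 2 : ℝ) ^ (p.1 + p.2)) (by positivity)]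
    have h1 : (1 / 2 : ℝ) ^ (p.1 + p.2) ≤ 1 := pow_le_one₀ (by norm_num) (by norm_num)
    calc |u p| * (1 / 2 : ℝ) ^ (p.1 + p.2) * |t p| ≤ |u p| * 1 * 1 := by
          gcongr
          exact ht p
      _ = |u p| := by ring
  have ex : (fun s => ev s y u) = fun s =>
      ∑' p : ℕ × ℕ, (u p * (1 / 2 : ℝ) ^ (p.1 + p.2) * Real.cos (p.2 * y)) *
        Real.cos (p.1 * s) := by
    ext s
    refine tsum_congr fun p => ?_
    simp only [mode, smul_eq_mul]; ring
  have ey : (fun s => ev x s u) = fun s =>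
      ∑' p : ℕ × ℕ, (u p * (1 / 2 : ℝ) ^ (p.1 + p.2) * Real.cos (p.1 * x)) *
        Real.cos (p.2 * s) := by
    ext s
    refine tsum_congr fun p => ?_
    simp only [mode, smul_eq_mul]; ring
  have tx : ∀ p : ℕ × ℕ, |Real.cos (p.1 * x)| ≤ 1 := fun p => Real.abs_cos_le_one _
  have ty : ∀ p : ℕ × ℕ, |Real.cos (p.2 * y)| ≤ 1 := fun p => Real.abs_cos_le_one _
  have kx := hw (fun p => p.1) _ (fun p => Nat.le_add_right _ _) ty
  have ky := hw (fun p => p.2) _ (fun p => Nat.le_add_left _ _) tx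
  unfold lap
  rw [ex, ey, deriv_deriv_tsum_cos (k := fun p => p.1) (hw0 _ ty) kx,
    deriv_deriv_tsum_cos (k := fun p => p.2) (hw0 _ tx) ky, ← Summable.tsum_add, evLap,
    lift_apply, ← tsum_neg]
  · refine tsum_congr fun p => ?_
    simp only [mode, smul_eq_mul]; ring
  · refine Summable.of_norm_bounded kx fun p => ?_
    rw [norm_neg, norm_mul, norm_mul, norm_pow, Real.norm_natCast, Real.norm_eq_abs]
    exact mul_le_of_le_one_right (by positivity) (Real.abs_cos_le_one _)
  · refine Summable.of_norm_bounded ky fun p => ?_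
    rw [norm_neg, norm_mul, norm_mul, norm_pow, Real.norm_natCast, Real.norm_eq_abs]
    exact mul_le_of_le_one_right (by positivity) (Real.abs_cos_le_one _)

lemma dblPeriodic_ev (u : E) : DblPeriodic fun x y => ev x y u := by
  intro x y
  constructor <;> refine tsum_congr fun p => ?_ <;> simp only [mode]
  · rw [mul_add, Real.cos_add_nat_mul_two_pi]
  · rw [mul_add, Real.cos_add_nat_mul_two_pi]

lemma symFun_ev (u : E) : SymFun fun x y => ev x y u := by
  intro x y
  constructor <;> refine tsum_congr fun p => ?_ <;> simp [mode]

/-! ### The Lyapunov–Schmidt reduction -/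

/-- The eigenvalues of the inverse of `-Δ - 2` on the complement of the kernel mode
`cos x cos y`, extended by zero to that mode. -/
def lam (p : ℕ × ℕ) : ℝ := if p = (1, 1) then 0 else ((p.1 : ℝ) ^ 2 + (p.2 : ℝ) ^ 2 - 2)⁻¹

lemma sq_add_sq_ne_two {p : ℕ × ℕ} (hp : p ≠ (1, 1)) : (p.1 : ℤ) ^ 2 + (p.2 : ℤ) ^ 2 - 2 ≠ 0 := by
  obtain ⟨m, n⟩ := p
  intro h
  apply hp
  have h' : m ^ 2 + n ^ 2 = 2 := by
    have : (m : ℤ) ^ 2 + (n : ℤ) ^ 2 = 2 := by simpa [sub_eq_zero] using h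
    exact_mod_cast this
  have hm : m < 2 := by nlinarith
  have hn : n < 2 := by nlinarith
  interval_cases m <;> interval_cases n <;> simp_all

lemma sq_add_sq_ne_two' {p : ℕ × ℕ} (hp : p ≠ (1, 1)) :
    (p.1 : ℝ) ^ 2 + (p.2 : ℝ) ^ 2 - 2 ≠ 0 := by
  exact_mod_cast sq_add_sq_ne_two hp

/-- The eigenvalues `m² + n² - 2` are integers, so the nonzero ones are at least `1` in size. -/
lemma abs_lam_le (p : ℕ × ℕ) : |lam p| ≤ 1 := by
  unfold lam
  split_ifs with hp
  · simp
  · rw [abs_inv]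
    apply inv_le_one_of_one_le₀
    exact_mod_cast Int.one_le_abs (sq_add_sq_ne_two hp)

/-- The bounded pseudo-inverse of `-Δ - 2`. -/
def T : E →L[ℝ] E := lift (fun p => lam p • b p) 1 fun p => by
  rw [norm_smul, norm_b, mul_one]; exact abs_lam_le p

@[simp] lemma T_b (p : ℕ × ℕ) : T (b p) = lam p • b p := by simp [T]

lemma norm_T_le (u : E) : ‖T u‖ ≤ ‖u‖ := by
  simpa [T] using norm_lift_apply_le (fun p => lam p • b p) 1 (_) u

/-- The coefficient of `cos x cos y`. -/
def pr : E →L[ℝ] ℝ := lift (fun p => if p = (1, 1) then 1 / 4 else 0) 1 fun p => by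
  split_ifs <;> norm_num

@[simp] lemma pr_b (p : ℕ × ℕ) : pr (b p) = if p = (1, 1) then 1 / 4 else 0 := by simp [pr]

lemma abs_pr_le (u : E) : |pr u| ≤ ‖u‖ := by
  have h := norm_lift_apply_le (fun p : ℕ × ℕ => if p = (1, 1) then (1 / 4 : ℝ) else 0) 1
    (fun p => by split_ifs <;> norm_num) u
  rwa [one_mul] at h

/-- The kernel mode `cos x cos y`. -/
def C0 : E := (4 : ℝ) • b (1, 1)

lemma norm_C0 : ‖C0‖ = 4 := by
  rw [C0, norm_smul, norm_b]; norm_num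

lemma evLap_C0 (x y : ℝ) : evLap x y C0 = 2 * ev x y C0 := by
  simp [C0]; ring

lemma evLap_T (x y : ℝ) (u : E) :
    evLap x y (T u) = 2 * ev x y (T u) + ev x y u - pr u * ev x y C0 := by
  have h : (evLap x y).comp T =
      (2 : ℝ) • (ev x y).comp T + ev x y - (ev x y C0) • pr := ext_b fun p => by
    by_cases hp : p = (1, 1)
    · subst hp
      simp [lam, C0]
      ring
    · have := sq_add_sq_ne_two' hp
      simp [lam, hp]
      field_simp
      ring
  simpa [mul_comm] using congrArg (fun f => f u) h

lemma pr_T (u : E) : pr (T u) = 0 := by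
  have h : pr.comp T = 0 := ext_b fun p => by
    by_cases hp : p = (1, 1) <;> simp [lam, hp]
  simpa using congrArg (fun f => f u) h

/-- With `ψ = C0 + v` and `κ` the coefficient of `cos x cos y` in `ψ²`, solvability on the kernel
mode forces `c = 2 - a κ`, and the remaining modes give `v = a • G v`. -/
def G (v : E) : E := T (mulE (C0 + v) (C0 + v) - pr (mulE (C0 + v) (C0 + v)) • v)

/-- A fixed point of `a • G` yields a solution `ψ = C0 + v` of `-Δψ = c ψ + a ψ²`, `c = 2 - a κ`. -/
lemma equation_of_fixed {a : ℝ} {v : E} (hv : v = a • G v) (x y : ℝ) :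
    evLap x y (C0 + v) = (2 - a * pr (mulE (C0 + v) (C0 + v))) * ev x y (C0 + v)
      + a * ev x y (C0 + v) ^ 2 := by
  set κ := pr (mulE (C0 + v) (C0 + v)) with hκ
  have hp : pr v = 0 := by
    rw [hv, map_smul, G, pr_T, smul_zero]
  have h1 : evLap x y v = 2 * ev x y v +
      a * (ev x y (C0 + v) ^ 2 - κ * ev x y v - κ * ev x y C0) := by
    have e1 : evLap x y v = a * evLap x y (G v) := by
      conv_lhs => rw [hv]
      simp
    have e2 : ev x y v = a * ev x y (G v) := by
      conv_lhs => rw [hv]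
      simp
    have e3 : evLap x y (G v) = 2 * ev x y (G v) +
        (ev x y (C0 + v) ^ 2 - κ * ev x y v - κ * ev x y C0) := by
      rw [G, evLap_T, map_sub (ev x y) (mulE _ _), map_sub pr, map_smul (ev x y) _ v,
        map_smul pr _ v, ev_mulE, ← hκ, hp]
      simp only [smul_eq_mul]
      ring
    rw [e1, e3]
    linear_combination (-2 : ℝ) * e2
  rw [map_add, h1, evLap_C0, map_add]
  ring

lemma contDiff_G : ContDiff ℝ 1 G := by
  unfold G
  have h : ContDiff ℝ 1 fun v : E => mulE (C0 + v) (C0 + v) := by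
    have : ContDiff ℝ 1 fun v : E => C0 + v := by fun_prop
    exact (mulE.contDiff.comp this).clm_apply this
  fun_prop

lemma exists_fixed : ∃ a₀ > (0 : ℝ), ∀ a ∈ Set.Ioo (0 : ℝ) a₀, ∃ v : E, ‖v‖ ≤ 1 ∧ v = a • G v := by
  obtain ⟨K, t, ht, hK⟩ := (contDiff_G.contDiffAt (x := 0)).exists_lipschitzOnWith
  obtain ⟨ε, hε, hεt⟩ := Metric.nhds_basis_closedBall.mem_iff.1 ht
  set ρ := min ε 1 with hρ
  have hρ0 : 0 < ρ := lt_min hε one_pos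
  have hs : Metric.closedBall (0 : E) ρ ⊆ t :=
    (Metric.closedBall_subset_closedBall (min_le_left _ _)).trans hεt
  have hlip : ∀ u ∈ Metric.closedBall (0 : E) ρ, ∀ v ∈ Metric.closedBall (0 : E) ρ,
      ‖G u - G v‖ ≤ K * ‖u - v‖ := fun u hu v hv => by
    simpa [dist_eq_norm] using hK.dist_le_mul u (hs hu) v (hs hv)
  -- `D` bounds `G` on the ball; the bound on `a` makes `a • G` a self-map and a `1/2`-contraction.
  set D : ℝ := K * ρ + ‖G 0‖ + 1 with hD
  have hD0 : 0 < D := by positivity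
  refine ⟨min (ρ / D) (1 / (2 * (K + 1))), by positivity, fun a ⟨ha, ha'⟩ => ?_⟩
  have ha1 : a * D ≤ ρ := ((lt_div_iff₀ hD0).1 (ha'.trans_le (min_le_left _ _))).le
  have ha2 : a * K ≤ 1 / 2 := by
    have := (lt_div_iff₀ (by positivity)).1 (ha'.trans_le (min_le_right _ _))
    linarith
  have hmaps : Set.MapsTo (fun v => a • G v) (Metric.closedBall (0 : E) ρ)
      (Metric.closedBall (0 : E) ρ) := fun v hv => by
    have h1 := hlip v hv 0 (Metric.mem_closedBall_self hρ0.le)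
    have hv' : ‖v‖ ≤ ρ := by simpa using hv
    have h2 : ‖G v‖ ≤ D := by
      have h3 : ‖G v‖ ≤ ‖G v - G 0‖ + ‖G 0‖ := by
        simpa using norm_add_le (G v - G 0) (G 0)
      have h4 : (K : ℝ) * ‖v - 0‖ ≤ K * ρ := by
        rw [sub_zero]; gcongr
      linarith
    rw [mem_closedBall_zero_iff, norm_smul, Real.norm_of_nonneg ha.le]
    exact (mul_le_mul_of_nonneg_left h2 ha.le).trans ha1
  have hcontr : ContractingWith (1 / 2) (hmaps.restrict _ _ _) := by
    refine ⟨by rw [← NNReal.coe_lt_coe]; norm_num, LipschitzWith.of_dist_le_mul ?_⟩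
    rintro ⟨u, hu⟩ ⟨v, hv⟩
    have h1 := hlip u hu v hv
    rw [Subtype.dist_eq, Subtype.dist_eq]
    simp only [Set.MapsTo.val_restrict_apply, dist_eq_norm]
    rw [← smul_sub, norm_smul, Real.norm_of_nonneg ha.le]
    calc a * ‖G u - G v‖ ≤ a * (K * ‖u - v‖) := by gcongr
      _ = (a * K) * ‖u - v‖ := by ring
      _ ≤ 1 / 2 * ‖u - v‖ := by gcongr
      _ = _ := by simp
  obtain ⟨v, hv, hfix, -⟩ := hcontr.exists_fixedPoint' Metric.isClosed_closedBall.isComplete hmaps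
    (Metric.mem_closedBall_self hρ0.le) (edist_ne_top _ _)
  have hv' : ‖v‖ ≤ ρ := by simpa using hv
  exact ⟨v, hv'.trans (min_le_right _ _), hfix.symm⟩

/-! ### The expansion -/

/-- The coefficient of `a` in the expansion of `v`. -/
def V1 : E := (2 / 3 : ℝ) • b (2, 2) + (1 / 2 : ℝ) • b (2, 0) + (1 / 2 : ℝ) • b (0, 2)
  - (1 / 8 : ℝ) • b (0, 0)

/-- The coefficient of `a ^ 2` in the expansion of `v`. -/
def V2 : E := (7 / 24 : ℝ) • b (3, 1) + (7 / 24 : ℝ) • b (1, 3) + (1 / 12 : ℝ) • b (3, 3)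

lemma norm_V1_le : ‖V1‖ ≤ 2 := by
  unfold V1
  refine (norm_sub_le _ _).trans ?_
  refine (add_le_add_left norm_add₃_le _).trans ?_
  simp only [norm_smul, norm_b]
  norm_num

lemma T_C0_C0 : T (mulE C0 C0) = V1 := by
  simp [C0, V1, mulBasis, dst, lam, smul_smul, smul_add]
  module

lemma T_C0_V1 : (2 : ℝ) • T (mulE C0 V1) = V2 := by
  simp [C0, V1, V2, mulBasis, dst, lam, smul_smul, smul_add]
  module

lemma pr_C0_C0 : pr (mulE C0 C0) = 0 := by
  simp [C0, mulBasis, dst]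

lemma pr_C0_V1 : 2 * pr (mulE C0 V1) = 1 / 48 := by
  simp [C0, V1, mulBasis, dst]
  norm_num

lemma pr_C0_V2 : pr (mulE C0 V2) = 0 := by
  simp [C0, V2, mulBasis, dst]

lemma pr_V1_V1 : pr (mulE V1 V1) = 0 := by
  simp [V1, mulBasis, dst]

lemma expansion {a : ℝ} {v : E} (ha : 0 < a) (ha1 : a ≤ 1) (hv1 : ‖v‖ ≤ 1) (hfix : v = a • G v) :
    ‖v - (a • V1 + a ^ 2 • V2)‖ ≤ 6880 * a ^ 3 ∧
      |pr (mulE (C0 + v) (C0 + v)) - a / 48| ≤ 186080 * a ^ 3 := by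
  have hn := norm_nonneg v
  have hsq : mulE (C0 + v) (C0 + v) = mulE C0 C0 + (2 : ℝ) • mulE C0 v + mulE v v := by
    simp only [map_add, add_apply]
    rw [mulE_comm v C0]
    module
  have hκ : pr (mulE (C0 + v) (C0 + v)) = 2 * pr (mulE C0 v) + pr (mulE v v) := by
    rw [hsq]; simp [pr_C0_C0]
  set κ := pr (mulE (C0 + v) (C0 + v)) with hκdef
  have hCu : ∀ u : E, ‖mulE C0 u‖ ≤ 4 * ‖u‖ := fun u => by
    simpa [norm_C0] using norm_mulE_le C0 u
  have hvv : ‖mulE v v‖ ≤ ‖v‖ * ‖v‖ := norm_mulE_le v v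
  have hκle : |κ| ≤ 9 * ‖v‖ := by
    have h1 := (abs_pr_le (mulE C0 v)).trans (hCu v)
    have h2 := (abs_pr_le (mulE v v)).trans hvv
    rw [hκ]
    refine (abs_add_le _ _).trans ?_
    rw [abs_mul, abs_two]
    nlinarith
  -- the part of `G v` that is quadratic in `v`
  set R : E := T (mulE v v) - κ • T v with hR
  have hRle : ‖R‖ ≤ 10 * ‖v‖ ^ 2 := by
    have h1 := (norm_T_le (mulE v v)).trans hvv
    have h2 : ‖κ • T v‖ ≤ 9 * ‖v‖ * ‖v‖ := by
      rw [norm_smul, Real.norm_eq_abs]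
      exact mul_le_mul hκle (norm_T_le v) (norm_nonneg _) (by positivity)
    have := norm_sub_le (T (mulE v v)) (κ • T v)
    rw [hR]
    linarith
  have hG : G v = V1 + (2 : ℝ) • T (mulE C0 v) + R := by
    rw [G, ← hκdef, hsq, map_sub, map_add, map_add, map_smul, map_smul, T_C0_C0, hR]
    module
  have hTC : ∀ u : E, ‖(2 : ℝ) • T (mulE C0 u)‖ ≤ 8 * ‖u‖ := fun u => by
    rw [norm_smul, Real.norm_two]
    linarith [norm_T_le (mulE C0 u), hCu u]
  have hv : ‖v‖ ≤ 20 * a := by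
    have h1 : ‖G v‖ ≤ 20 := by
      rw [hG]
      refine norm_add₃_le.trans ?_
      nlinarith [norm_V1_le, hTC v]
    have h2 : ‖v‖ = a * ‖G v‖ := by
      conv_lhs => rw [hfix]
      rw [norm_smul, Real.norm_of_nonneg ha.le]
    rw [h2]
    nlinarith
  have hR' : ‖R‖ ≤ 4000 * a ^ 2 := by nlinarith
  set w : E := v - a • V1 with hw
  have hw_eq : w = a • ((2 : ℝ) • T (mulE C0 v) + R) := by
    rw [hw]
    conv_lhs => rw [hfix, hG]
    module
  have hwle : ‖w‖ ≤ 360 * a ^ 2 := by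
    rw [hw_eq, norm_smul, Real.norm_of_nonneg ha.le]
    have h1 : ‖(2 : ℝ) • T (mulE C0 v) + R‖ ≤ 360 * a := by
      refine (norm_add_le _ _).trans ?_
      nlinarith [hTC v]
    nlinarith
  have hvw : v = a • V1 + w := by rw [hw]; module
  set z : E := v - (a • V1 + a ^ 2 • V2) with hz
  have hz_eq : z = a • ((2 : ℝ) • T (mulE C0 w) + R) := by
    have e1 : z = w - a ^ 2 • V2 := by rw [hz, hw]; module
    have e2 : mulE C0 v = a • mulE C0 V1 + mulE C0 w := by
      conv_lhs => rw [hvw]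
      simp
    rw [e1, ← T_C0_V1]
    conv_lhs => rw [hw_eq, e2]
    simp only [map_add, map_smul]
    module
  have hzle : ‖z‖ ≤ 6880 * a ^ 3 := by
    rw [hz_eq, norm_smul, Real.norm_of_nonneg ha.le]
    have h1 : ‖(2 : ℝ) • T (mulE C0 w) + R‖ ≤ 6880 * a ^ 2 := by
      refine (norm_add_le _ _).trans ?_
      linarith [hTC w]
    nlinarith
  refine ⟨hzle, ?_⟩
  have k1 : 2 * pr (mulE C0 v) = a / 48 + 2 * pr (mulE C0 z) := by
    have e : v = a • V1 + a ^ 2 • V2 + z := by rw [hz]; module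
    have e2 : pr (mulE C0 v) = a * pr (mulE C0 V1) + a ^ 2 * pr (mulE C0 V2)
        + pr (mulE C0 z) := by
      conv_lhs => rw [e]
      simp
    rw [e2, pr_C0_V2]
    linear_combination a * pr_C0_V1
  have k2 : pr (mulE v v) = 2 * a * pr (mulE V1 w) + pr (mulE w w) := by
    have e2 : mulE v v = a ^ 2 • mulE V1 V1 + (2 * a) • mulE V1 w + mulE w w := by
      conv_lhs => rw [hvw]
      simp only [map_add, map_smul, add_apply, smul_apply]
      rw [mulE_comm w V1]
      module
    rw [e2]
    simp [pr_V1_V1]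
  have b1 : |pr (mulE C0 z)| ≤ 4 * (6880 * a ^ 3) :=
    (abs_pr_le _).trans ((hCu z).trans (by linarith))
  have b2 : |pr (mulE V1 w)| ≤ 2 * (360 * a ^ 2) :=
    (abs_pr_le _).trans ((norm_mulE_le _ _).trans
      (mul_le_mul norm_V1_le hwle (norm_nonneg _) (by norm_num)))
  have b3 : |pr (mulE w w)| ≤ 129600 * a ^ 3 := by
    refine (abs_pr_le _).trans ((norm_mulE_le _ _).trans
      ((mul_le_mul hwle hwle (norm_nonneg _) (by positivity)).trans ?_))
    have : a ^ 4 ≤ a ^ 3 := pow_le_pow_of_le_one ha.le ha1 (by norm_num)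
    nlinarith
  have e : κ - a / 48 = 2 * pr (mulE C0 z) + 2 * a * pr (mulE V1 w) + pr (mulE w w) := by
    rw [hκ, k1, k2]; ring
  rw [e]
  refine (abs_add_three _ _ _).trans ?_
  rw [abs_mul, abs_mul, abs_mul, abs_two, abs_of_pos ha]
  have b2' : 2 * a * |pr (mulE V1 w)| ≤ 2 * a * (2 * (360 * a ^ 2)) := by gcongr
  nlinarith

end StokesWave

/-- Existence of small-amplitude periodic waves for p = 1, with the third-order
Stokes expansion `2 + a cos x cos y + ...` and frequency expansion `c = 2 - a²/48 + O(a⁴)`. -/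
theorem small_amplitude_waves_p_one :
    ∃ a₀ > (0:ℝ), ∃ C > (0:ℝ), ∀ a ∈ Set.Ioo (0:ℝ) a₀,
      ∃ (c : ℝ) (φ : ℝ → ℝ → ℝ),
        Smooth2 φ ∧ DblPeriodic φ ∧ SymFun φ ∧
        (∀ x y : ℝ, -(lap φ x y) + c * φ x y = (φ x y)^2) ∧
        (∀ x y : ℝ,
          |φ x y - (2 + a * Real.cos x * Real.cos y
            + (a^2/8) * (-(7/6) + (Real.cos (2*x) + Real.cos (2*y))
                + (1/3) * Real.cos (2*x) * Real.cos (2*y))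
            + (a^3/384) * (7 * (Real.cos (3*x) * Real.cos y + Real.cos x * Real.cos (3*y))
                + (1/2) * Real.cos (3*x) * Real.cos (3*y)))| ≤ C * a^4) ∧
        |c - (2 - a^2/48)| ≤ C * a^4 := by
  obtain ⟨a₁, ha₁, hex⟩ := StokesWave.exists_fixed
  refine ⟨min a₁ 1, lt_min ha₁ one_pos, 200000, by norm_num, fun a ⟨ha, ha'⟩ => ?_⟩
  obtain ⟨v, hv1, hfix⟩ := hex a ⟨ha, ha'.trans_le (min_le_left _ _)⟩
  obtain ⟨hz, hκ⟩ := StokesWave.expansion ha (ha'.trans_le (min_le_right _ _)).le hv1 hfix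
  have heq := StokesWave.equation_of_fixed hfix
  set κ := StokesWave.pr (StokesWave.mulE (StokesWave.C0 + v) (StokesWave.C0 + v))
  have ha3 : a * a ^ 3 = a ^ 4 := by ring
  have hc : |(2 - a * κ) - (2 - a ^ 2 / 48)| ≤ 186080 * a ^ 4 := by
    have e : (2 - a * κ) - (2 - a ^ 2 / 48) = -(a * (κ - a / 48)) := by ring
    rw [e, abs_neg, abs_mul, abs_of_pos ha]
    nlinarith
  -- the wave is `c + a ψ`, whose coefficient sequence is `U`
  set U : StokesWave.E := (2 - a * κ) • StokesWave.b (0, 0) + a • (StokesWave.C0 + v) with hU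
  have hev : ∀ x y, StokesWave.ev x y U =
      (2 - a * κ) + a * StokesWave.ev x y (StokesWave.C0 + v) := fun x y => by
    simp [hU, StokesWave.mode, mul_add]
  refine ⟨2 - a * κ, fun x y => StokesWave.ev x y U, StokesWave.smooth_ev U,
    StokesWave.dblPeriodic_ev U, StokesWave.symFun_ev U, fun x y => ?_, fun x y => ?_,
    hc.trans (by gcongr; norm_num)⟩
  · have hl : StokesWave.evLap x y U = a * StokesWave.evLap x y (StokesWave.C0 + v) := by
      simp [hU, mul_add]
    beta_reduce
    rw [StokesWave.lap_ev, neg_neg, hl, heq, hev]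
    ring
  · set z := v - (a • StokesWave.V1 + a ^ 2 • StokesWave.V2) with hzdef
    have e : v = a • StokesWave.V1 + a ^ 2 • StokesWave.V2 + z := by rw [hzdef]; module
    have hz' := (StokesWave.abs_ev_le x y z).trans hz
    have h1 : StokesWave.ev x y (StokesWave.C0 + v) = Real.cos x * Real.cos y
        + a * StokesWave.ev x y StokesWave.V1 + a ^ 2 * StokesWave.ev x y StokesWave.V2
        + StokesWave.ev x y z := by
      conv_lhs => rw [e]
      simp [StokesWave.C0, StokesWave.mode]
      ring
    have h2 : StokesWave.ev x y StokesWave.V1 = 1 / 24 * (Real.cos (2 * x) * Real.cos (2 * y))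
        + 1 / 8 * Real.cos (2 * x) + 1 / 8 * Real.cos (2 * y) - 1 / 8 := by
      simp [StokesWave.V1, StokesWave.mode]
      ring
    have h3 : StokesWave.ev x y StokesWave.V2 = 7 / 384 * (Real.cos (3 * x) * Real.cos y)
        + 7 / 384 * (Real.cos x * Real.cos (3 * y))
        + 1 / 768 * (Real.cos (3 * x) * Real.cos (3 * y)) := by
      simp [StokesWave.V2, StokesWave.mode]
      ring
    have h4 : ∀ X : ℝ, X = ((2 - a * κ) - (2 - a ^ 2 / 48)) + a * StokesWave.ev x y z →
        |X| ≤ 200000 * a ^ 4 := by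
      rintro X rfl
      refine (abs_add_le _ _).trans ?_
      rw [abs_mul, abs_of_pos ha]
      have : a * |StokesWave.ev x y z| ≤ a * (6880 * a ^ 3) := by gcongr
      have : 0 < a ^ 4 := by positivity
      linarith
    apply h4
    beta_reduce
    rw [hev, h1, h2, h3]
    ring
end
end

section
/- Let p ≥ 2 be an integer and set c₂ = −(1/p)[(p(p+1)/192)·(2/p)^{2(p−1)/p}·(p+1)!/(p−1)! + (3/32)·(2/p)^{(p−2)/p}·(p+1)!/(p−2)!]. There exist a₀ > 0 and C > 0 such that for every a ∈ (0,a₀) there are a real number c(a) and a smooth, doubly 2π-periodic, symmetric function φ_a : ℝ² → ℝ satisfying −Δφ_a + c(a)φ_a = φ_a^{p+1} on ℝ², such that for all (x,y) ∈ ℝ²: |φ_a(x,y) − ((2/p)^{1/p} + a cos x cos y)| ≤ C a², and |c(a) − (2/p + c₂ a²)| ≤ C a⁴. -/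
/-!
The waves bifurcate from the constant state `b = (2/p)^{1/p}`, where `-Δ + c - (p+1) b^p = -Δ - 2`
has the kernel `cos x cos y` among even doubly periodic functions. They are found by a
Lyapunov–Schmidt reduction carried out directly in the variable `s = a²`, so that the error term
`O(a⁴)` in the frequency is an ordinary second-order Taylor remainder in `s`.

Functions are cosine series with coefficients in the weighted space `V = ℓ¹(ℕ × ℕ)`, weight
`2^(k+l)` at the mode `cos kx cos ly`; this is a Banach algebra, and exponential decay of the
coefficients makes every element smooth (`smooth_ser`). To work with `s` instead of `a`, the modes
with `k` odd are rescaled: `v : V` represents the function in which these modes carry a factor `a`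
(`ev`). Pointwise multiplication then becomes `B0 + s B1`, where `B1` collects the products of two
odd modes (`ev_mul`), so the equation is polynomial in `(s, v)`. At `s = 0` it has the exact
solution `b + cos x cos y` for the frequency `2/p`.

Writing `c = (b + ell z)^p` and `v = (b + ell z) + cos x cos y + Q z`, where `ell` is the
`cos x cos y` coefficient and `Q` the complementary projection, the equation becomes
`bifEq p b (s, z) = 0`. Its `z`-derivative at the origin is `1 - N` with `N² = 0`
(`hasFDerivAt_bifEq`, `B0_u1_Minv_B0_u1`), hence invertible, and the implicit function theorem
yields a `C²` branch `z = g s` (`exists_branch`). Differentiating the equation along the branch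
gives the derivative of `ell (g s)` at `0`, and with it `c₂` (`c2_eq`). Reading the equation mode by
mode (`modes_of_bifEq`, `wave_equation`) returns a classical solution.
-/

noncomputable section
open Real MeasureTheory Filter

/-! ### Linear maps out of `ℓ¹` -/

/-- The Banach space `ℓ¹(ℕ × ℕ)`. The sequence `v` stands for the cosine series with coefficient
`v (k, l) / 2 ^ (k + l)` at `cos (k x) cos (l y)`. -/
abbrev V : Type := lp (fun _ : ℕ × ℕ => ℝ) 1

/-- The weight `2 ^ (-(k + l))` of the mode `(k, l)`. -/
def wt (i : ℕ × ℕ) : ℝ := (1 / 2) ^ (i.1 + i.2)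

lemma wt_pos (i : ℕ × ℕ) : 0 < wt i := by unfold wt; positivity

lemma V.hasSum_abs (v : V) : HasSum (fun i => |v i|) ‖v‖ := by
  have h := lp.hasSum_norm (p := 1) (by simp) v
  simpa using h

lemma V.summable_abs (v : V) : Summable (fun i => |v i|) := v.hasSum_abs.summable

section Lift

variable {E : Type*} [NormedAddCommGroup E] [NormedSpace ℝ E] [CompleteSpace E]

lemma lift_summable (f : ℕ × ℕ → E) (C : ℝ) (hf : ∀ i, ‖f i‖ ≤ C) (v : V) :
    Summable (fun i => v i • f i) := by
  refine Summable.of_norm_bounded (v.summable_abs.mul_right C) fun i => ?_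
  rw [norm_smul, Real.norm_eq_abs]
  exact mul_le_mul_of_nonneg_left (hf i) (abs_nonneg _)

/-- The bounded linear map `v ↦ ∑ vᵢ fᵢ` determined by a bounded family `f`. -/
def lift (f : ℕ × ℕ → E) (C : ℝ) (hf : ∀ i, ‖f i‖ ≤ C) : V →L[ℝ] E :=
  LinearMap.mkContinuous
    { toFun := fun v => ∑' i, v i • f i
      map_add' := fun v w => by
        rw [← (lift_summable f C hf v).tsum_add (lift_summable f C hf w)]
        exact tsum_congr fun i => by simp [add_smul]
      map_smul' := fun c v => by
        simp only [RingHom.id_apply]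
        rw [← (lift_summable f C hf v).tsum_const_smul]
        exact tsum_congr fun i => by simp [mul_smul] }
    C fun v => by
      have h := (v.hasSum_abs.mul_right C)
      refine (tsum_of_norm_bounded h fun i => ?_).trans (by rw [mul_comm])
      rw [norm_smul, Real.norm_eq_abs]
      exact mul_le_mul_of_nonneg_left (hf i) (abs_nonneg _)

lemma lift_apply (f : ℕ × ℕ → E) (C : ℝ) (hf : ∀ i, ‖f i‖ ≤ C) (v : V) :
    lift f C hf v = ∑' i, v i • f i := rfl

lemma norm_lift_le (f : ℕ × ℕ → E) (C : ℝ) (hC : 0 ≤ C) (hf : ∀ i, ‖f i‖ ≤ C) :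
    ‖lift f C hf‖ ≤ C := LinearMap.mkContinuous_norm_le _ hC _

lemma lift_single (f : ℕ × ℕ → E) (C : ℝ) (hf : ∀ i, ‖f i‖ ≤ C) (i : ℕ × ℕ) (a : ℝ) :
    lift f C hf (lp.single 1 i a) = a • f i := by
  rw [lift_apply, tsum_eq_single i]
  · rw [lp.single_apply_self]
  · intro j hj
    rw [lp.single_apply_ne _ _ _ hj, zero_smul]

end Lift

/-- The sequence representing the function `cos (k x) cos (l y)`. -/
def cc (i : ℕ × ℕ) : V := lp.single 1 i (2 ^ (i.1 + i.2))

lemma single_eq (i : ℕ × ℕ) (a : ℝ) : (lp.single 1 i a : V) = (a * wt i) • cc i := by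
  rw [cc, ← lp.single_smul]
  congr 1
  rw [smul_eq_mul, wt, mul_assoc, ← mul_pow]
  norm_num

lemma norm_cc (i : ℕ × ℕ) : ‖cc i‖ = 2 ^ (i.1 + i.2) := by
  rw [cc, lp.norm_single (by norm_num)]
  simp

/-- Bounded linear maps on `V` are determined by their values on the cosine modes. -/
lemma V.ext_cc {E : Type*} [NormedAddCommGroup E] [NormedSpace ℝ E] {A B : V →L[ℝ] E}
    (h : ∀ i, A (cc i) = B (cc i)) : A = B := by
  ext v
  have hv := lp.hasSum_single (p := 1) (by norm_num) v
  have h1 := A.hasSum hv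
  have h2 := B.hasSum hv
  refine h1.unique ?_
  convert h2 using 2 with i
  rw [single_eq, map_smul, map_smul, h]

lemma lift_cc {E : Type*} [NormedAddCommGroup E] [NormedSpace ℝ E] [CompleteSpace E]
    (f : ℕ × ℕ → E) (C : ℝ) (hf : ∀ i, ‖f i‖ ≤ C) (i : ℕ × ℕ) :
    lift f C hf (cc i) = (2 : ℝ) ^ (i.1 + i.2) • f i := lift_single _ _ _ _ _

/-! ### Graded multiplication -/

/-- The sequence representing the product of the modes `i` and `j`. -/
def prodMode (i j : ℕ × ℕ) : V :=
  (1 / 4 : ℝ) • (cc (i.1 + j.1, i.2 + j.2) + cc (i.1 + j.1, Nat.dist i.2 j.2)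
    + cc (Nat.dist i.1 j.1, i.2 + j.2) + cc (Nat.dist i.1 j.1, Nat.dist i.2 j.2))

lemma dist_le_add (a b : ℕ) : Nat.dist a b ≤ a + b := by unfold Nat.dist; omega

lemma norm_prodMode_le (i j : ℕ × ℕ) :
    ‖(wt i * wt j) • prodMode i j‖ ≤ 1 := by
  have hw : wt i * wt j = (1 / 2) ^ ((i.1 + j.1) + (i.2 + j.2)) := by
    unfold wt; rw [← pow_add]; congr 1; ring
  have key : ∀ m n : ℕ, m ≤ i.1 + j.1 → n ≤ i.2 + j.2 →
      ‖cc (m, n)‖ ≤ 2 ^ ((i.1 + j.1) + (i.2 + j.2)) := by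
    intro m n hm hn
    rw [norm_cc]
    exact pow_le_pow_right₀ (by norm_num) (by simp only; omega)
  have d1 := dist_le_add i.1 j.1
  have d2 := dist_le_add i.2 j.2
  have h1 := key _ _ le_rfl le_rfl
  have h2 := key _ _ le_rfl d2
  have h3 := key _ _ d1 le_rfl
  have h4 := key _ _ d1 d2
  rw [norm_smul, prodMode, norm_smul, hw, norm_pow]
  have hn := norm_add₄_le (a := cc (i.1 + j.1, i.2 + j.2)) (b := cc (i.1 + j.1, Nat.dist i.2 j.2))
    (c := cc (Nat.dist i.1 j.1, i.2 + j.2)) (d := cc (Nat.dist i.1 j.1, Nat.dist i.2 j.2))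
  set N := (i.1 + j.1) + (i.2 + j.2)
  have e : (‖(1 / 2 : ℝ)‖) ^ N * 2 ^ N = 1 := by
    rw [← mul_pow]; norm_num
  calc _ ≤ ‖(1 / 2 : ℝ)‖ ^ N * (‖(1 / 4 : ℝ)‖ * (4 * 2 ^ N)) := by
        gcongr
        linarith
    _ = ‖(1 / 2 : ℝ)‖ ^ N * 2 ^ N := by norm_num; ring
    _ ≤ 1 := e.le

/-- The structure constants of the product, cut off by a predicate `P` on pairs of modes. -/
def bilinFam (P : ℕ × ℕ → ℕ × ℕ → Prop) [∀ i j, Decidable (P i j)] (i j : ℕ × ℕ) : V :=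
  if P i j then (wt i * wt j) • prodMode i j else 0

lemma norm_bilinFam_le (P : ℕ × ℕ → ℕ × ℕ → Prop) [∀ i j, Decidable (P i j)] (i j : ℕ × ℕ) :
    ‖bilinFam P i j‖ ≤ 1 := by
  unfold bilinFam
  split_ifs
  · exact norm_prodMode_le i j
  · simp

/-- The bilinear product on `V` that keeps only the products of pairs of modes in `P`. -/
def bilin (P : ℕ × ℕ → ℕ × ℕ → Prop) [∀ i j, Decidable (P i j)] : V →L[ℝ] V →L[ℝ] V :=
  lift (fun i => lift (bilinFam P i) 1 (norm_bilinFam_le P i)) 1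
    fun _ => norm_lift_le _ _ zero_le_one _

lemma bilin_cc (P : ℕ × ℕ → ℕ × ℕ → Prop) [∀ i j, Decidable (P i j)] (i j : ℕ × ℕ) :
    bilin P (cc i) (cc j) = if P i j then prodMode i j else 0 := by
  rw [bilin, lift_cc, smul_apply, lift_cc, bilinFam]
  split_ifs
  · rw [smul_smul, smul_smul]
    have : (2 : ℝ) ^ (i.1 + i.2) * 2 ^ (j.1 + j.2) * (wt i * wt j) = 1 := by
      unfold wt
      rw [mul_mul_mul_comm, ← mul_pow, ← mul_pow]
      norm_num
    rw [this, one_smul]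
  · simp

/-- Pairs of modes that are both odd, where the parity of `(k, l)` is that of `k`. -/
def BothOdd (i j : ℕ × ℕ) : Prop := i.1 % 2 = 1 ∧ j.1 % 2 = 1

instance (i j : ℕ × ℕ) : Decidable (BothOdd i j) := by unfold BothOdd; infer_instance

/-- The product of series with the products of two odd modes left out. -/
def B0 : V →L[ℝ] V →L[ℝ] V := bilin fun i j => ¬ BothOdd i j

/-- The product of the odd parts of two series. -/
def B1 : V →L[ℝ] V →L[ℝ] V := bilin BothOdd

lemma B0_cc (i j : ℕ × ℕ) : B0 (cc i) (cc j) = if BothOdd i j then 0 else prodMode i j := by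
  rw [B0, bilin_cc]; split_ifs <;> rfl

lemma B1_cc (i j : ℕ × ℕ) : B1 (cc i) (cc j) = if BothOdd i j then prodMode i j else 0 :=
  bilin_cc _ _ _

lemma prodMode_comm (i j : ℕ × ℕ) : prodMode i j = prodMode j i := by
  simp only [prodMode, add_comm, Nat.dist_comm]

/-- The constant function `1`. -/
def e0 : V := cc (0, 0)

/-- The function `cos x cos y`, which spans the kernel of `-Δ - 2`. -/
def u1 : V := cc (1, 1)

lemma prodMode_zero (j : ℕ × ℕ) : prodMode (0, 0) j = cc j := by
  simp only [prodMode, zero_add, Nat.dist_zero_left, Prod.mk.eta]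
  module

lemma B0_e0_left (v : V) : B0 e0 v = v := by
  have : B0 e0 = ContinuousLinearMap.id ℝ V := V.ext_cc fun j => by
    rw [e0, B0_cc, if_neg (by simp [BothOdd]), prodMode_zero]; rfl
  rw [this]; rfl

lemma B0_comm (v w : V) : B0 v w = B0 w v := by
  have : B0 = B0.flip := V.ext_cc fun i => V.ext_cc fun j => by
    simp only [ContinuousLinearMap.flip_apply, B0_cc, prodMode_comm j i, BothOdd, and_comm]
  conv_lhs => rw [this]
  rfl

lemma B0_e0_right (v : V) : B0 v e0 = v := by rw [B0_comm, B0_e0_left]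

lemma B1_e0_left (v : V) : B1 e0 v = 0 := by
  have : B1 e0 = 0 := V.ext_cc fun j => by
    rw [e0, B1_cc, if_neg (by simp [BothOdd])]; rfl
  rw [this]; rfl

lemma B1_u1_e0 : B1 u1 e0 = 0 := by
  rw [e0, u1, B1_cc, if_neg (by simp [BothOdd])]

lemma B0_u1_cc_odd (j : ℕ × ℕ) (hj : j.1 % 2 = 1) : B0 u1 (cc j) = 0 := by
  rw [u1, B0_cc, if_pos ⟨rfl, hj⟩]

lemma B0_u1_u1 : B0 u1 u1 = 0 := B0_u1_cc_odd _ rfl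

lemma B0_u1_prodMode (j : ℕ × ℕ) (hj : j.1 % 2 ≠ 1) : B0 u1 (prodMode (1, 1) j) = 0 := by
  have h1 : (1 + j.1) % 2 = 1 := by omega
  have h2 : Nat.dist 1 j.1 % 2 = 1 := by unfold Nat.dist; omega
  simp only [prodMode, map_smul, map_add]
  rw [B0_u1_cc_odd _ h1, B0_u1_cc_odd _ h1, B0_u1_cc_odd _ h2, B0_u1_cc_odd _ h2]
  simp

/-- Multiplication by the odd function `u1` produces odd functions, which `B0 u1` annihilates. -/
lemma B0_u1_B0_u1 (v : V) : B0 u1 (B0 u1 v) = 0 := by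
  have : (B0 u1).comp (B0 u1) = 0 := V.ext_cc fun j => by
    simp only [ContinuousLinearMap.comp_apply, zero_apply]
    conv_lhs => rw [u1, B0_cc]
    split_ifs with h
    · simp
    · exact B0_u1_prodMode j fun h' => h ⟨rfl, h'⟩
  exact DFunLike.congr_fun this v

/-- The square of `cos x cos y`. -/
def q2 : V := B1 u1 u1

lemma q2_eq : q2 = (1 / 4 : ℝ) • (cc (2, 2) + cc (2, 0) + cc (0, 2) + cc (0, 0)) := by
  rw [q2, u1, B1_cc, if_pos ⟨rfl, rfl⟩]
  rfl

/-! ### Diagonal operators -/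

/-- The Fourier multiplier with bounded symbol `m`. -/
def diag (m : ℕ × ℕ → ℝ) (C : ℝ) (hm : ∀ i, |m i| ≤ C) : V →L[ℝ] V :=
  lift (fun i => m i • (lp.single 1 i (1 : ℝ) : V)) C fun i => by
    rw [norm_smul, lp.norm_single (by norm_num)]
    simpa using hm i

lemma diag_cc (m : ℕ × ℕ → ℝ) (C : ℝ) (hm : ∀ i, |m i| ≤ C) (i : ℕ × ℕ) :
    diag m C hm (cc i) = m i • cc i := by
  rw [diag, lift_cc, single_eq, smul_smul, smul_smul]
  congr 1
  have : (2 : ℝ) ^ (i.1 + i.2) * wt i = 1 := by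
    unfold wt; rw [← mul_pow]; norm_num
  linear_combination m i * this

/-- The coordinate functional `v ↦ v i`. -/
def coord (i : ℕ × ℕ) : V →L[ℝ] ℝ :=
  lift (fun j => if j = i then 1 else 0) 1 fun j => by split_ifs <;> simp

lemma coord_apply (i : ℕ × ℕ) (v : V) : coord i v = v i := by
  rw [coord, lift_apply, tsum_eq_single i] <;> simp +contextual

lemma coord_cc (i j : ℕ × ℕ) : coord i (cc j) = if i = j then 2 ^ (i.1 + i.2) else 0 := by
  rw [coord_apply, cc]
  split_ifs with h
  · subst h; rw [lp.single_apply_self]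
  · rw [lp.single_apply_ne _ _ _ h]

lemma diag_apply (m : ℕ × ℕ → ℝ) (C : ℝ) (hm : ∀ i, |m i| ≤ C) (v : V) (i : ℕ × ℕ) :
    diag m C hm v i = m i * v i := by
  have : (coord i).comp (diag m C hm) = m i • coord i := V.ext_cc fun j => by
    rw [ContinuousLinearMap.comp_apply, diag_cc, smul_apply, map_smul,
      coord_cc]
    split_ifs with h
    · rw [h]
    · simp
  have h := DFunLike.congr_fun this v
  simpa [coord_apply] using h

/-! ### Rapidly decreasing cosine series -/

/-- The sum of the double cosine series with coefficients `d`. -/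
def ser (d : ℕ × ℕ → ℝ) (x y : ℝ) : ℝ := ∑' i : ℕ × ℕ, d i * (cos (i.1 * x) * cos (i.2 * y))

/-- Coefficients decreasing faster than any power of the frequency. -/
def Rapid (d : ℕ × ℕ → ℝ) : Prop := ∀ n : ℕ, Summable fun i : ℕ × ℕ => |d i| * ((i.1 : ℝ) + i.2) ^ n

lemma iteratedFDeriv_cos_le (L : ℝ × ℝ →L[ℝ] ℝ) (n : ℕ) (x : ℝ × ℝ) :
    ‖iteratedFDeriv ℝ n (fun z => cos (L z)) x‖ ≤ ‖L‖ ^ n := by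
  have h := L.iteratedFDeriv_comp_right (f := cos) (Real.contDiff_cos (n := n)) x le_rfl
  have h' : (fun z => cos (L z)) = cos ∘ L := rfl
  rw [h', h]
  refine (ContinuousMultilinearMap.norm_compContinuousLinearMap_le _ _).trans ?_
  rw [Finset.prod_const, Finset.card_univ, Fintype.card_fin]
  have : ‖iteratedFDeriv ℝ n cos (L x)‖ ≤ 1 := by
    rw [norm_iteratedFDeriv_eq_norm_iteratedDeriv, Real.norm_eq_abs]
    exact Real.abs_iteratedDeriv_cos_le_one n _
  exact mul_le_of_le_one_left (by positivity) this

lemma iteratedFDeriv_mode_le (k l : ℕ) (n : ℕ) (x : ℝ × ℝ) :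
    ‖iteratedFDeriv ℝ n (fun z : ℝ × ℝ => cos (k * z.1) * cos (l * z.2)) x‖ ≤ ((k : ℝ) + l) ^ n := by
  set A : ℝ × ℝ →L[ℝ] ℝ := (k : ℝ) • ContinuousLinearMap.fst ℝ ℝ ℝ with hA
  set B : ℝ × ℝ →L[ℝ] ℝ := (l : ℝ) • ContinuousLinearMap.snd ℝ ℝ ℝ with hB
  have nA : ‖A‖ ≤ k := by
    rw [hA, norm_smul]
    simp
  have nB : ‖B‖ ≤ l := by
    rw [hB, norm_smul]
    simp
  have e : (fun z : ℝ × ℝ => cos (k * z.1) * cos (l * z.2)) =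
      fun z => (1 / 2 : ℝ) • (cos ((A + B) z) + cos ((A - B) z)) := by
    funext z
    simp only [hA, hB, add_apply, sub_apply, smul_apply, ContinuousLinearMap.coe_fst',
      ContinuousLinearMap.coe_snd', smul_eq_mul]
    rw [cos_add, cos_sub]; ring
  have c1 : ContDiff ℝ n fun z => cos ((A + B) z) := by fun_prop
  have c2 : ContDiff ℝ n fun z => cos ((A - B) z) := by fun_prop
  rw [e, iteratedFDeriv_const_smul_apply' (by fun_prop), norm_smul,
    fun_iteratedFDeriv_add_apply c1.contDiffAt c2.contDiffAt]
  have b1 := iteratedFDeriv_cos_le (A + B) n x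
  have b2 := iteratedFDeriv_cos_le (A - B) n x
  have g1 : ‖A + B‖ ^ n ≤ ((k : ℝ) + l) ^ n := by
    gcongr; exact (norm_add_le _ _).trans (by linarith)
  have g2 : ‖A - B‖ ^ n ≤ ((k : ℝ) + l) ^ n := by
    gcongr; exact (norm_sub_le _ _).trans (by linarith)
  have := norm_add_le (iteratedFDeriv ℝ n (fun z => cos ((A + B) z)) x)
    (iteratedFDeriv ℝ n (fun z => cos ((A - B) z)) x)
  have h2 : ‖(1 / 2 : ℝ)‖ = 1 / 2 := by norm_num
  rw [h2]
  linarith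

lemma smooth_ser {d : ℕ × ℕ → ℝ} (hd : Rapid d) : Smooth2 (ser d) := by
  unfold Smooth2 ser
  refine contDiff_tsum (v := fun n i => |d i| * ((i.1 : ℝ) + i.2) ^ n)
    (fun i => by fun_prop) (fun n _ => hd n) fun n i x _ => ?_
  have := iteratedFDeriv_const_smul_apply' (𝕜 := ℝ) (i := n) (a := d i) (x := x)
    (f := fun z : ℝ × ℝ => cos (i.1 * z.1) * cos (i.2 * z.2)) (by fun_prop)
  simp only [smul_eq_mul] at this
  rw [this, norm_smul, Real.norm_eq_abs]
  gcongr
  exact iteratedFDeriv_mode_le _ _ _ _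

lemma periodic_ser (d : ℕ × ℕ → ℝ) : DblPeriodic (ser d) := by
  intro x y
  have key : ∀ (k : ℕ) (t : ℝ), cos (k * (t + 2 * π)) = cos (k * t) := fun k t => by
    rw [mul_add, cos_add_nat_mul_two_pi]
  simp only [ser, key, and_self]

lemma sym_ser (d : ℕ × ℕ → ℝ) : SymFun (ser d) := by
  intro x y
  simp only [ser, mul_neg, cos_neg, and_self]

lemma Rapid.summable_ser {d : ℕ × ℕ → ℝ} (hd : Rapid d) (x y : ℝ) :
    Summable fun i : ℕ × ℕ => d i * (cos (i.1 * x) * cos (i.2 * y)) := by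
  refine Summable.of_norm_bounded (hd 0) fun i => ?_
  rw [norm_mul, norm_mul, pow_zero, Real.norm_eq_abs]
  gcongr
  exact mul_le_one₀ (abs_cos_le_one _) (norm_nonneg _) (abs_cos_le_one _)

lemma Rapid.mul_sq {d : ℕ × ℕ → ℝ} (hd : Rapid d) (m : ℕ × ℕ → ℝ)
    (hm : ∀ i, |m i| ≤ ((i.1 : ℝ) + i.2) ^ 2) : Rapid fun i => d i * m i := by
  intro n
  refine Summable.of_nonneg_of_le (fun i => by positivity) (fun i => ?_) (hd (2 + n))
  rw [abs_mul, pow_add, ← mul_assoc]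
  gcongr
  exact hm i

/-- A cosine series in one variable may be differentiated twice term by term. -/
lemma deriv_deriv_cos_series (d : ℕ × ℕ → ℝ) (k : ℕ × ℕ → ℕ) (h0 : Summable fun i => |d i|)
    (h1 : Summable fun i => |d i| * k i) (h2 : Summable fun i => |d i| * (k i : ℝ) ^ 2) (x : ℝ) :
    deriv (fun t => deriv (fun s => ∑' i, d i * cos (k i * s)) t) x
      = -∑' i, d i * (k i : ℝ) ^ 2 * cos (k i * x) := by
  have lin : ∀ (i : ℕ × ℕ) (t : ℝ), HasDerivAt (fun s : ℝ => (k i : ℝ) * s) (k i) t := fun i t => by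
    simpa using (hasDerivAt_id t).const_mul (k i : ℝ)
  have D1 : ∀ t, HasDerivAt (fun s => ∑' i, d i * cos (k i * s))
      (∑' i, d i * (-sin (k i * t) * k i)) t := by
    intro t
    refine hasDerivAt_tsum h1 (fun i s => ((lin i s).cos).const_mul (d i)) (fun i s => ?_)
      (y₀ := 0) ?_ t
    · rw [norm_mul, norm_mul, norm_neg, Real.norm_eq_abs, Real.norm_eq_abs, Real.norm_natCast]
      gcongr
      exact mul_le_of_le_one_left (by positivity) (abs_sin_le_one _)
    · simpa using h0.of_abs
  have D2 : HasDerivAt (fun t => ∑' i, d i * (-sin (k i * t) * k i))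
      (∑' i, d i * (-(cos (k i * x) * k i) * k i)) x := by
    refine hasDerivAt_tsum h2
      (fun i s => (((lin i s).sin.neg).mul_const (k i : ℝ)).const_mul (d i)) (fun i s => ?_)
      (y₀ := 0) ?_ x
    · rw [norm_mul, norm_mul, norm_neg, norm_mul, Real.norm_eq_abs, Real.norm_eq_abs,
        Real.norm_natCast, mul_assoc, ← sq]
      gcongr
      exact mul_le_of_le_one_left (by positivity) (abs_cos_le_one _)
    · simp
  have e : (fun t => deriv (fun s => ∑' i, d i * cos (k i * s)) t)
      = fun t => ∑' i, d i * (-sin (k i * t) * k i) := funext fun t => (D1 t).deriv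
  rw [e, D2.deriv, ← tsum_neg]
  exact tsum_congr fun i => by ring

/-- The symbol of `-Δ`. -/
def lam (i : ℕ × ℕ) : ℝ := (i.1 : ℝ) ^ 2 + (i.2 : ℝ) ^ 2

lemma Rapid.mul_of_le_one {d : ℕ × ℕ → ℝ} (hd : Rapid d) (m : ℕ × ℕ → ℝ)
    (hm : ∀ i, |m i| ≤ 1) : Rapid fun i => d i * m i := by
  intro n
  refine Summable.of_nonneg_of_le (fun i => by positivity) (fun i => ?_) (hd n)
  rw [abs_mul]
  gcongr
  exact mul_le_of_le_one_right (abs_nonneg _) (hm i)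

lemma lap_ser {d : ℕ × ℕ → ℝ} (hd : Rapid d) (x y : ℝ) :
    -lap (ser d) x y = ser (fun i => d i * lam i) x y := by
  have a1 := hd.mul_sq (fun i => (i.1 : ℝ) ^ 2) fun i => by
    rw [abs_of_nonneg (by positivity)]; gcongr; simp
  have a2 := hd.mul_sq (fun i => (i.2 : ℝ) ^ 2) fun i => by
    rw [abs_of_nonneg (by positivity)]; gcongr; simp
  have R1 := hd.mul_of_le_one (fun i => cos (i.2 * y)) fun i => abs_cos_le_one _
  have R2 := hd.mul_of_le_one (fun i => cos (i.1 * x)) fun i => abs_cos_le_one _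
  have l1 := deriv_deriv_cos_series (fun i => d i * cos (i.2 * y)) (fun i => i.1)
    (by simpa using R1 0)
    (Summable.of_nonneg_of_le (fun i => by positivity) (fun i => by
      rw [pow_one]; gcongr; simp) (R1 1))
    (Summable.of_nonneg_of_le (fun i => by positivity) (fun i => by
      gcongr; simp) (R1 2)) x
  have l2 := deriv_deriv_cos_series (fun i => d i * cos (i.1 * x)) (fun i => i.2)
    (by simpa using R2 0)
    (Summable.of_nonneg_of_le (fun i => by positivity) (fun i => by
      rw [pow_one]; gcongr; simp) (R2 1))
    (Summable.of_nonneg_of_le (fun i => by positivity) (fun i => by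
      gcongr; simp) (R2 2)) y
  have e1 : (fun s => ser d s y) = fun s => ∑' i : ℕ × ℕ, d i * cos (i.2 * y) * cos (i.1 * s) := by
    funext s; exact tsum_congr fun i => by ring
  have e2 : (fun s => ser d x s) = fun s => ∑' i : ℕ × ℕ, d i * cos (i.1 * x) * cos (i.2 * s) := by
    funext s; exact tsum_congr fun i => by ring
  unfold lap
  rw [e1, e2, l1, l2, neg_add, neg_neg, neg_neg, ser]
  have s1 := a1.summable_ser x y
  have s2 := a2.summable_ser x y
  rw [← Summable.tsum_add]
  · exact tsum_congr fun i => by rw [lam]; ring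
  · exact s1.congr fun i => by ring
  · exact s2.congr fun i => by ring

/-! ### Evaluation of elements of `V` -/

/-- The factor `a ^ (k mod 2)` by which evaluation scales the odd modes. -/
def par (a : ℝ) (i : ℕ × ℕ) : ℝ := a ^ (i.1 % 2)

lemma abs_par_le {a : ℝ} (ha : |a| ≤ 1) (i : ℕ × ℕ) : |par a i| ≤ 1 := by
  rw [par, abs_pow]; exact pow_le_one₀ (abs_nonneg _) ha

lemma wt_le_one (i : ℕ × ℕ) : wt i ≤ 1 := pow_le_one₀ (by norm_num) (by norm_num)

/-- Cosine coefficients of the function that evaluation attaches to `v`. -/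
def cf (a : ℝ) (v : V) (i : ℕ × ℕ) : ℝ := v i * (par a i * wt i)

lemma rapid_cf {a : ℝ} (ha : |a| ≤ 1) (v : V) : Rapid (cf a v) := by
  intro n
  obtain ⟨C, hC⟩ : ∃ C : ℝ, ∀ m : ℕ, (1 / 2 : ℝ) ^ m * (m : ℝ) ^ n ≤ C := by
    have h := tendsto_pow_const_mul_const_pow_of_lt_one n (r := (1 / 2 : ℝ)) (by norm_num)
      (by norm_num)
    obtain ⟨C, hC⟩ := h.bddAbove_range
    exact ⟨C, fun m => by rw [mul_comm]; exact hC ⟨m, rfl⟩⟩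
  refine Summable.of_nonneg_of_le (fun i => by positivity) (fun i => ?_)
    (v.summable_abs.mul_right C)
  have h := hC (i.1 + i.2)
  push_cast at h
  rw [cf, abs_mul, abs_mul, abs_of_pos (wt_pos i), mul_assoc]
  gcongr
  refine le_trans ?_ h
  rw [mul_assoc]
  exact mul_le_of_le_one_left (by have := wt_pos i; positivity) (abs_par_le ha i)

lemma norm_mode_le {a : ℝ} (ha : |a| ≤ 1) (x y : ℝ) (i : ℕ × ℕ) :
    ‖par a i * wt i * (cos (i.1 * x) * cos (i.2 * y))‖ ≤ 1 := by
  rw [norm_mul, norm_mul, norm_mul]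
  refine mul_le_one₀ (mul_le_one₀ (abs_par_le ha i) (norm_nonneg _) ?_) (by positivity)
    (mul_le_one₀ (abs_cos_le_one _) (norm_nonneg _) (abs_cos_le_one _))
  rw [Real.norm_eq_abs, abs_of_pos (wt_pos i)]
  exact wt_le_one i

/-- Evaluation at `(x, y)`, with the odd modes multiplied by `a`. -/
def ev (a : ℝ) (ha : |a| ≤ 1) (x y : ℝ) : V →L[ℝ] ℝ :=
  lift (fun i => par a i * wt i * (cos (i.1 * x) * cos (i.2 * y))) 1 (norm_mode_le ha x y)

lemma ev_eq_ser {a : ℝ} (ha : |a| ≤ 1) (x y : ℝ) (v : V) : ev a ha x y v = ser (cf a v) x y := by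
  rw [ev, lift_apply, ser]
  exact tsum_congr fun i => by rw [cf, smul_eq_mul]; ring

lemma abs_ev_le {a : ℝ} (ha : |a| ≤ 1) (x y : ℝ) (v : V) : |ev a ha x y v| ≤ ‖v‖ := by
  have h := (ev a ha x y).le_opNorm v
  have h2 := norm_lift_le _ 1 zero_le_one (norm_mode_le ha x y)
  exact h.trans (mul_le_of_le_one_left (norm_nonneg _) h2)

lemma ev_cc {a : ℝ} (ha : |a| ≤ 1) (x y : ℝ) (i : ℕ × ℕ) :
    ev a ha x y (cc i) = par a i * (cos (i.1 * x) * cos (i.2 * y)) := by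
  have : (2 : ℝ) ^ (i.1 + i.2) * wt i = 1 := by
    unfold wt; rw [← mul_pow]; norm_num
  rw [ev, lift_cc, smul_eq_mul]
  linear_combination par a i * (cos (i.1 * x) * cos (i.2 * y)) * this

lemma cos_dist (k m : ℕ) (x : ℝ) : cos ((Nat.dist k m : ℕ) * x) = cos (k * x - m * x) := by
  rcases le_total k m with h | h
  · rw [Nat.dist_eq_sub_of_le h, Nat.cast_sub h, ← cos_neg]; congr 1; ring
  · rw [Nat.dist_eq_sub_of_le_right h, Nat.cast_sub h]; congr 1; ring

lemma ev_prodMode {a : ℝ} (ha : |a| ≤ 1) (x y : ℝ) (i j : ℕ × ℕ) :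
    ev a ha x y (prodMode i j) = a ^ ((i.1 + j.1) % 2) *
      (cos (i.1 * x) * cos (i.2 * y)) * (cos (j.1 * x) * cos (j.2 * y)) := by
  have h : Nat.dist i.1 j.1 % 2 = (i.1 + j.1) % 2 := by unfold Nat.dist; omega
  simp only [prodMode, map_smul, map_add, ev_cc, par, h, cos_dist, Nat.cast_add, add_mul, cos_add,
    cos_sub, smul_eq_mul]
  ring

/-- Evaluation is multiplicative for the product `B0 + a² B1`: two odd modes, each scaled by `a`,
multiply to an even mode, which evaluation does not scale. -/
lemma ev_mul {a : ℝ} (ha : |a| ≤ 1) (x y : ℝ) (v w : V) :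
    ev a ha x y (B0 v w + a ^ 2 • B1 v w) = ev a ha x y v * ev a ha x y w := by
  set e := ev a ha x y with he
  have h1 : ∀ i j, e (B0 (cc i) (cc j) + a ^ 2 • B1 (cc i) (cc j)) = e (cc i) * e (cc j) := by
    intro i j
    rw [B0_cc, B1_cc, he, ev_cc, ev_cc, par, par]
    split_ifs with h
    · have h' : (i.1 + j.1) % 2 = 0 := by have := h.1; have := h.2; omega
      rw [zero_add, map_smul, ev_prodMode, smul_eq_mul, h', h.1, h.2]; ring
    · have h' : (i.1 + j.1) % 2 = i.1 % 2 + j.1 % 2 := by unfold BothOdd at h; omega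
      rw [smul_zero, add_zero, ev_prodMode, h', pow_add]; ring
  have h2 : ∀ i w, e (B0 (cc i) w + a ^ 2 • B1 (cc i) w) = e (cc i) * e w := by
    intro i w
    have : e.comp (B0 (cc i) + a ^ 2 • B1 (cc i)) = e (cc i) • e := V.ext_cc fun j => by
      simpa using h1 i j
    simpa using DFunLike.congr_fun this w
  have : e.comp (B0.flip w + a ^ 2 • B1.flip w) = e w • e := V.ext_cc fun i => by
    simpa [mul_comm] using h2 i w
  simpa [mul_comm] using DFunLike.congr_fun this v

/-! ### Powers -/

/-- The `n`-th power of `z.2` for the product `B0 + z.1 • B1`. -/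
def gpow : ℕ → ℝ × V → V
  | 0, _ => e0
  | n + 1, z => B0 z.2 (gpow n z) + z.1 • B1 z.2 (gpow n z)

lemma ev_e0 {a : ℝ} (ha : |a| ≤ 1) (x y : ℝ) : ev a ha x y e0 = 1 := by
  rw [e0, ev_cc, par]; simp

lemma ev_u1 {a : ℝ} (ha : |a| ≤ 1) (x y : ℝ) : ev a ha x y u1 = a * cos x * cos y := by
  rw [u1, ev_cc, par]; simp [mul_assoc]

lemma ev_gpow {a : ℝ} (ha : |a| ≤ 1) (x y : ℝ) (v : V) (n : ℕ) :
    ev a ha x y (gpow n (a ^ 2, v)) = ev a ha x y v ^ n := by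
  induction n with
  | zero => rw [gpow, ev_e0, pow_zero]
  | succ n ih =>
    change ev a ha x y (B0 v (gpow n (a ^ 2, v)) + a ^ 2 • B1 v (gpow n (a ^ 2, v))) = _
    rw [ev_mul, ih, pow_succ']

lemma contDiff_gpow (n : ℕ) : ContDiff ℝ 2 (gpow n) := by
  induction n with
  | zero => exact contDiff_const
  | succ n ih =>
    have h0 : ContDiff ℝ 2 fun z : ℝ × V => B0 z.2 (gpow n z) :=
      (B0.contDiff.comp contDiff_snd).clm_apply ih
    have h1 : ContDiff ℝ 2 fun z : ℝ × V => B1 z.2 (gpow n z) :=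
      (B1.contDiff.comp contDiff_snd).clm_apply ih
    exact h0.add (contDiff_fst.smul h1)

lemma gpow_base {b : ℝ} (hb : b ≠ 0) (n : ℕ) :
    gpow n (0, b • e0 + u1) = b ^ n • e0 + (n * b ^ n / b) • u1 := by
  induction n with
  | zero => simp [gpow]
  | succ n ih =>
    rw [gpow, ih]
    simp only [map_add, map_smul, add_apply, smul_apply, B0_e0_left, B0_u1_u1,
      B0_e0_right, zero_smul, add_zero]
    have : ((n + 1 : ℕ) * b ^ (n + 1) / b) = b * (n * b ^ n / b) + b ^ n := by
      push_cast; field_simp; ring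
    rw [this]
    module

/-- First-order expansion of `gpow n` at `s = 0`, `v = b + u1`, where `u1 * u1` vanishes to zeroth
order in `s`. -/
lemma hasFDerivAt_gpow {b : ℝ} (hb : b ≠ 0) (n : ℕ) :
    ∃ D : ℝ × V →L[ℝ] V, HasFDerivAt (gpow n) D (0, b • e0 + u1) ∧ ∀ δs δv, D (δs, δv) =
      (n * b ^ n / b) • δv + (n * (n - 1) * b ^ n / b ^ 2) • B0 u1 δv
      + δs • ((n * (n - 1) / 2 * b ^ n / b ^ 2) • q2
        + (n * (n - 1) * (n - 2) / 6 * b ^ n / b ^ 3) • B0 u1 q2) := by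
  induction n with
  | zero => exact ⟨0, hasFDerivAt_const _ _, by simp⟩
  | succ n ih =>
    obtain ⟨D, hD, hD'⟩ := ih
    have h2 : HasFDerivAt (fun z : ℝ × V => z.2) (ContinuousLinearMap.snd ℝ ℝ V)
      (0, b • e0 + u1) := hasFDerivAt_snd
    have h1 : HasFDerivAt (fun z : ℝ × V => z.1) (ContinuousLinearMap.fst ℝ ℝ V)
      (0, b • e0 + u1) := hasFDerivAt_fst
    have k0 := B0.hasFDerivAt_of_bilinear h2 hD
    have k1 := B1.hasFDerivAt_of_bilinear h2 hD
    refine ⟨_, k0.add (h1.smul k1), fun δs δv => ?_⟩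
    have key : ∀ v P, v = b • e0 + u1 → P = b ^ n • e0 + (n * b ^ n / b) • u1 →
        B0 v (D (δs, δv)) + B0 δv P + ((0 : ℝ) • (B1 v (D (δs, δv)) + B1 δv P) + δs • B1 v P) =
        (((n + 1 : ℕ) : ℝ) * b ^ (n + 1) / b) • δv
        + (((n + 1 : ℕ) : ℝ) * ((n + 1 : ℕ) - 1) * b ^ (n + 1) / b ^ 2) • B0 u1 δv
        + δs • ((((n + 1 : ℕ) : ℝ) * ((n + 1 : ℕ) - 1) / 2 * b ^ (n + 1) / b ^ 2) • q2
        + (((n + 1 : ℕ) : ℝ) * ((n + 1 : ℕ) - 1) * ((n + 1 : ℕ) - 2) / 6 * b ^ (n + 1) / b ^ 3)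
          • B0 u1 q2) := by
      rintro v P rfl rfl
      simp only [hD', map_add, map_smul, add_apply, smul_apply, B0_e0_left, B0_e0_right,
        B1_e0_left, B1_u1_e0, zero_smul, zero_add, B0_u1_B0_u1, smul_zero, add_zero,
        B0_comm δv u1]
      rw [← q2]
      push_cast
      match_scalars <;> field_simp <;> ring
    exact key _ _ rfl (gpow_base hb n)

/-! ### The bifurcation equation -/

/-- The coefficient of `cos x cos y`. -/
def ell : V →L[ℝ] ℝ := (1 / 4 : ℝ) • coord (1, 1)

lemma ell_cc (i : ℕ × ℕ) : ell (cc i) = if (1, 1) = i then 1 else 0 := by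
  rw [ell, smul_apply, coord_cc]
  split_ifs <;> norm_num

lemma ell_u1 : ell u1 = 1 := by rw [u1, ell_cc, if_pos rfl]

lemma u1_apply (i : ℕ × ℕ) : u1 i = if i = (1, 1) then 4 else 0 := by
  rw [← coord_apply, u1, coord_cc]
  split_ifs with h
  · subst h; norm_num
  · rfl

lemma e0_apply (i : ℕ × ℕ) : e0 i = if i = (0, 0) then 1 else 0 := by
  rw [← coord_apply, e0, coord_cc]
  split_ifs with h
  · subst h; norm_num
  · rfl

/-- The projection that removes the `cos x cos y` component. -/
def Q : V →L[ℝ] V := ContinuousLinearMap.id ℝ V - ell.smulRight u1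

lemma Q_def (z : V) : Q z = z - ell z • u1 := rfl

/-- The wave `b + ell z + cos x cos y + Q z`, with unit `cos x cos y` component. The number `ell z`
is free because `Q z` does not see it; it encodes the unknown frequency `(b + ell z) ^ p`. -/
def wave (b : ℝ) (z : V) : V := (b + ell z) • e0 + u1 + Q z

/-- Right-hand side of the equation `(-Δ - 2) (Q z) = rhs`, with frequency `(b + ell z) ^ p`. -/
def rhs (p : ℕ) (b : ℝ) (z : ℝ × V) : V :=
  gpow (p + 1) (z.1, wave b z.2) - (b + ell z.2) ^ p • wave b z.2
    - (2 : ℝ) • (wave b z.2 - (b + ell z.2) • e0)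

/-- The symbol of the inverse of `-Δ - 2`, with value `γ` at the resonant mode `(1, 1)`. -/
def msym (γ : ℝ) (i : ℕ × ℕ) : ℝ := if i = (1, 1) then γ else 1 / (lam i - 2)

lemma one_le_abs_lam {i : ℕ × ℕ} (hi : i ≠ (1, 1)) : 1 ≤ |lam i - 2| := by
  obtain ⟨k, l⟩ := i
  have h : ((k : ℤ) ^ 2 + (l : ℤ) ^ 2 - 2) ≠ 0 := by
    intro h
    have hk : k < 2 := by
      by_contra hk
      have : (2 : ℤ) ≤ k := by omega
      nlinarith [sq_nonneg (l : ℤ)]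
    have hl : l < 2 := by
      by_contra hl
      have : (2 : ℤ) ≤ l := by omega
      nlinarith [sq_nonneg (k : ℤ)]
    interval_cases k <;> interval_cases l <;> simp_all
  have h1 := Int.one_le_abs h
  rw [lam]
  exact_mod_cast h1

lemma abs_msym_le (γ : ℝ) (i : ℕ × ℕ) : |msym γ i| ≤ max 1 |γ| := by
  unfold msym
  split_ifs with h
  · exact le_max_right _ _
  · have := one_le_abs_lam h
    rw [abs_div, abs_one]
    exact le_max_of_le_left ((div_le_one (by linarith)).2 this)

/-- The Fourier multiplier with symbol `msym γ`. -/
def Minv (γ : ℝ) : V →L[ℝ] V := diag (msym γ) _ (abs_msym_le γ)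

lemma Minv_cc (γ : ℝ) (i : ℕ × ℕ) : Minv γ (cc i) = msym γ i • cc i := diag_cc _ _ _ _

lemma ell_Minv (γ : ℝ) (v : V) : ell (Minv γ v) = γ * ell v := by
  simp only [ell, smul_apply, coord_apply, Minv, diag_apply, msym, if_true, smul_eq_mul]
  ring

/-- `Minv` is diagonal, hence preserves parity. -/
lemma B0_u1_Minv_B0_u1 (γ : ℝ) (v : V) : B0 u1 (Minv γ (B0 u1 v)) = 0 := by
  have : (B0 u1).comp ((Minv γ).comp (B0 u1)) = 0 := V.ext_cc fun j => by
    simp only [ContinuousLinearMap.comp_apply, zero_apply]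
    rw [show B0 u1 (cc j) = _ from B0_cc (1, 1) j]
    split_ifs with h
    · simp
    · have hj : j.1 % 2 ≠ 1 := fun h' => h ⟨rfl, h'⟩
      have h1 : (1 + j.1) % 2 = 1 := by omega
      have h2 : Nat.dist 1 j.1 % 2 = 1 := by unfold Nat.dist; omega
      simp only [prodMode, map_smul, map_add, Minv_cc]
      rw [B0_u1_cc_odd _ h1, B0_u1_cc_odd _ h1, B0_u1_cc_odd _ h2, B0_u1_cc_odd _ h2]
      simp
  exact DFunLike.congr_fun this v

lemma ell_q2 : ell q2 = 0 := by
  rw [q2_eq]; simp [ell_cc]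

lemma B0_u1_cc (j : ℕ × ℕ) (hj : j.1 % 2 ≠ 1) : B0 u1 (cc j) = prodMode (1, 1) j := by
  rw [u1, B0_cc, if_neg fun h => hj h.2]

lemma ell_prod :
    ell (B0 u1 (cc (2, 2))) = 1 / 4 ∧ ell (B0 u1 (cc (2, 0))) = 1 / 2 ∧
    ell (B0 u1 (cc (0, 2))) = 1 / 2 ∧ ell (B0 u1 (cc (0, 0))) = 1 := by
  rw [B0_u1_cc _ (by decide), B0_u1_cc _ (by decide), B0_u1_cc _ (by decide),
    B0_u1_cc _ (by decide)]
  simp only [prodMode, map_smul, map_add, ell_cc, smul_eq_mul, Nat.dist]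
  norm_num

lemma ell_u1_q2 : ell (B0 u1 q2) = 9 / 16 := by
  obtain ⟨h1, h2, h3, h4⟩ := ell_prod
  rw [q2_eq]
  simp only [map_smul, map_add, h1, h2, h3, h4, smul_eq_mul]
  norm_num

lemma ell_u1_Minv_q2 (γ : ℝ) : ell (B0 u1 (Minv γ q2)) = 1 / 96 := by
  obtain ⟨h1, h2, h3, h4⟩ := ell_prod
  rw [q2_eq]
  simp only [map_smul, map_add, Minv_cc, h1, h2, h3, h4, smul_eq_mul, msym, lam]
  norm_num

/-- The resonant value of the multiplier, chosen so that the linearised equation is unipotent. -/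
def gam (p : ℕ) (b : ℝ) : ℝ := -1 / ((p : ℝ) ^ 2 * b ^ p / b)

/-- The bifurcation equation is `bifEq p b (s, z) = 0`. -/
def bifEq (p : ℕ) (b : ℝ) (z : ℝ × V) : V := Q z.2 - Minv (gam p b) (rhs p b z)

lemma wave_zero (b : ℝ) : wave b 0 = b • e0 + u1 := by simp [wave]

lemma contDiff_wave (b : ℝ) : ContDiff ℝ 2 (wave b) := by unfold wave; fun_prop

lemma contDiff_bifEq (p : ℕ) (b : ℝ) : ContDiff ℝ 2 (bifEq p b) := by
  have hw : ContDiff ℝ 2 fun z : ℝ × V => wave b z.2 := (contDiff_wave b).comp contDiff_snd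
  have hg : ContDiff ℝ 2 fun z : ℝ × V => gpow (p + 1) (z.1, wave b z.2) :=
    (contDiff_gpow _).comp (contDiff_fst.prodMk hw)
  unfold bifEq rhs
  fun_prop

lemma bifEq_zero {p : ℕ} {b : ℝ} (hb : b ≠ 0) (hp : (p : ℝ) * b ^ p = 2) : bifEq p b (0, 0) = 0 := by
  have : rhs p b (0, 0) = 0 := by
    simp only [rhs, wave_zero, gpow_base hb, map_zero, add_zero]
    push_cast
    match_scalars
    · field_simp; ring
    · field_simp; linear_combination b * hp
  simp [bifEq, this]

/-- The derivative of `bifEq` in `s` at the base point is `-Minv (source p b)`. -/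
def source (p : ℕ) (b : ℝ) : V :=
  ((p + 1) * p / 2 * b ^ p / b : ℝ) • q2 + ((p + 1) * p * (p - 1) / 6 * b ^ p / b ^ 2 : ℝ) • B0 u1 q2

lemma hasFDerivAt_bifEq {p : ℕ} {b : ℝ} (hb : b ≠ 0) (hp0 : p ≠ 0) (hp : (p : ℝ) * b ^ p = 2) :
    ∃ D : ℝ × V →L[ℝ] V, HasFDerivAt (bifEq p b) D (0, 0) ∧ ∀ δs δz, D (δs, δz) =
      δz - Minv (gam p b) (((p + 1) * p * b ^ p / b : ℝ) • B0 u1 δz + δs • source p b) := by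
  obtain ⟨D, hD, hD'⟩ := hasFDerivAt_gpow hb (p + 1)
  have h2 : HasFDerivAt (fun z : ℝ × V => z.2) (ContinuousLinearMap.snd ℝ ℝ V) (0, 0) :=
    hasFDerivAt_snd
  have h1 : HasFDerivAt (fun z : ℝ × V => z.1) (ContinuousLinearMap.fst ℝ ℝ V) (0, 0) :=
    hasFDerivAt_fst
  have hl : HasFDerivAt (fun z : ℝ × V => b + ell z.2) (ell.comp (ContinuousLinearMap.snd ℝ ℝ V))
      (0, 0) := (ell.hasFDerivAt.comp _ h2).const_add b
  have hQ : HasFDerivAt (fun z : ℝ × V => Q z.2) (Q.comp (ContinuousLinearMap.snd ℝ ℝ V))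
      (0, 0) := Q.hasFDerivAt.comp _ h2
  have hw := ((hl.smul_const e0).add_const u1).add hQ
  have hw' : HasFDerivAt (fun z : ℝ × V => wave b z.2) _ (0, 0) := hw
  have hD2 : HasFDerivAt (gpow (p + 1)) D ((0 : ℝ × V).1, wave b (0 : ℝ × V).2) := by
    simpa [wave_zero] using hD
  have hg := HasFDerivAt.comp (0 : ℝ × V) hD2 (h1.prodMk hw')
  have hr := (hg.sub ((hl.pow p).smul hw')).sub ((hw'.sub (hl.smul_const e0)).const_smul (2 : ℝ))
  have hF := hQ.sub ((Minv (gam p b)).hasFDerivAt.comp _ hr)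
  refine ⟨_, hF, fun δs δz => ?_⟩
  have hγ : gam p b * ((p : ℝ) ^ 2 * b ^ p / b) = -1 := by
    have : (p : ℝ) ≠ 0 := by exact_mod_cast hp0
    rw [gam]; field_simp
  have hpp : b ^ (p - 1) = b ^ p / b := by
    obtain ⟨n, rfl⟩ := Nat.exists_eq_succ_of_ne_zero hp0
    rw [Nat.succ_sub_one, pow_succ]; field_simp
  have hMu : Minv (gam p b) u1 = gam p b • u1 := Minv_cc _ _
  have key : ∀ c w, c = b → w = b • e0 + u1 →
      Q δz - Minv (gam p b) (D (δs, ell δz • e0 + Q δz)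
        - (c ^ p • (ell δz • e0 + Q δz) + (((p : ℝ) * c ^ (p - 1)) * ell δz) • w)
        - (2 : ℝ) • ((ell δz • e0 + Q δz) - ell δz • e0))
      = δz - Minv (gam p b) (((p + 1) * p * b ^ p / b : ℝ) • B0 u1 δz + δs • source p b) := by
    rintro c w rfl rfl
    have e : D (δs, ell δz • e0 + Q δz)
        - (c ^ p • (ell δz • e0 + Q δz) + (((p : ℝ) * c ^ (p - 1)) * ell δz) • (c • e0 + u1))
        - (2 : ℝ) • ((ell δz • e0 + Q δz) - ell δz • e0)
        = (((p : ℝ) ^ 2 * c ^ p / c) * ell δz) • u1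
          + (((p + 1) * p * c ^ p / c : ℝ) • B0 u1 δz + δs • source p c) := by
      rw [hD', hpp, source]
      simp only [Q_def, map_add, map_sub, map_smul, B0_e0_right, B0_u1_u1, smul_zero, sub_zero]
      push_cast
      have hpR : (p : ℝ) ≠ 0 := by exact_mod_cast hp0
      have hcp : c ^ p = 2 / p := by field_simp; linear_combination hp
      simp only [pow_succ c p, hcp]
      match_scalars <;> field_simp <;> ring
    rw [e, map_add, map_smul, hMu, Q_def, smul_smul]
    have : (p : ℝ) ^ 2 * c ^ p / c * ell δz * gam p c = - ell δz := by
      linear_combination ell δz * hγ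
    rw [this]
    module
  refine Eq.trans ?_ (key (b + ell (0 : ℝ × V).2) (wave b (0 : ℝ × V).2) (by simp)
    (by simp [wave_zero]))
  simp

/-! ### The bifurcating branch -/

/-- Solutions of the bifurcation equation near the base point, by the implicit function theorem.
The linearisation in `z` is `1 - N` with `N ^ 2 = 0`, so its inverse is `1 + N`. -/
lemma exists_branch {p : ℕ} {b : ℝ} (hb : b ≠ 0) (hp0 : p ≠ 0) (hp : (p : ℝ) * b ^ p = 2) :
    ∃ g : ℝ → V, ContDiffAt ℝ 2 g 0 ∧ g 0 = 0 ∧ (∀ᶠ s in nhds 0, bifEq p b (s, g s) = 0) ∧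
      HasDerivAt (fun s => ell (g s)) (gam p b *
        (9 / 16 * ((p + 1) * p * (p - 1) / 6 * b ^ p / b ^ 2)
          + ((p + 1) * p * b ^ p / b) * ((p + 1) * p / 2 * b ^ p / b) / 96)) 0 := by
  obtain ⟨D, hD, hD'⟩ := hasFDerivAt_bifEq hb hp0 hp
  set κ : ℝ := (p + 1) * p * b ^ p / b with hκ
  have cdf : ContDiffAt ℝ 2 (bifEq p b) (0, 0) := (contDiff_bifEq p b).contDiffAt
  set N : V →L[ℝ] V := κ • (Minv (gam p b)).comp (B0 u1) with hN
  have hN' : ∀ v, N v = κ • Minv (gam p b) (B0 u1 v) := fun v => rfl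
  have hNN : ∀ v, N (N v) = 0 := fun v => by
    rw [hN' v, map_smul, hN', B0_u1_Minv_B0_u1, map_zero, smul_zero, smul_zero]
  have inv : (fderiv ℝ (bifEq p b) (0, 0) ∘L .inr ℝ ℝ V).IsInvertible := by
    refine ⟨ContinuousLinearEquiv.equivOfInverse (ContinuousLinearMap.id ℝ V - N)
      (ContinuousLinearMap.id ℝ V + N) (fun v => ?_) (fun v => ?_), ?_⟩
    · change (v - N v) + N (v - N v) = v
      rw [map_sub, hNN]; abel
    · change (v + N v) - N (v + N v) = v
      rw [map_add, hNN]; abel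
    · rw [hD.fderiv]
      ext1 v
      change v - N v = D (0, v)
      rw [hD', hN', zero_smul, add_zero, map_smul]
  have two : (2 : WithTop ℕ∞) ≠ 0 := by norm_num
  set g := cdf.implicitFunction two inv with hg
  have g1 : ContDiffAt ℝ 2 g 0 := cdf.contDiffAt_implicitFunction two inv
  have g2 : g 0 = 0 := cdf.implicitFunction_apply_self two inv
  have g3 : ∀ᶠ s in nhds 0, bifEq p b (s, g s) = 0 := by
    have := cdf.eventually_apply_implicitFunction two inv
    rwa [bifEq_zero hb hp] at this
  refine ⟨g, g1, g2, g3, ?_⟩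
  have gd : HasDerivAt g (deriv g 0) 0 := (g1.differentiableAt two).hasDerivAt
  set ζ := deriv g 0
  have hζ : D (1, ζ) = 0 := by
    have h1 : HasDerivAt (fun s : ℝ => (s, g s)) ((1 : ℝ), ζ) 0 := (hasDerivAt_id 0).prodMk gd
    have h2 : HasFDerivAt (bifEq p b) D ((0 : ℝ), g 0) := by rwa [g2]
    have h3 := h2.comp_hasDerivAt (0 : ℝ) h1
    have h4 : HasDerivAt (bifEq p b ∘ fun s : ℝ => (s, g s)) 0 0 :=
      (hasDerivAt_const (0 : ℝ) (0 : V)).congr_of_eventuallyEq g3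
    exact h3.unique h4
  rw [hD', one_smul, sub_eq_zero] at hζ
  have e1 : B0 u1 ζ = ((p + 1) * p / 2 * b ^ p / b : ℝ) • B0 u1 (Minv (gam p b) q2) := by
    conv_lhs => rw [hζ]
    simp only [source, map_add, map_smul, B0_u1_Minv_B0_u1, smul_zero, zero_add, add_zero]
  have e2 : ell ζ = gam p b *
        (9 / 16 * ((p + 1) * p * (p - 1) / 6 * b ^ p / b ^ 2)
          + κ * ((p + 1) * p / 2 * b ^ p / b) / 96) := by
    rw [hζ, ell_Minv, e1, source]
    simp only [map_add, map_smul, ell_u1_Minv_q2, ell_q2, ell_u1_q2, smul_eq_mul]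
    ring
  have := ell.hasFDerivAt.comp_hasDerivAt (0 : ℝ) gd
  rw [e2] at this
  exact this

/-! ### Back to the standing-wave equation -/

/-- A zero of the bifurcation equation satisfies the standing-wave equation mode by mode. -/
lemma modes_of_bifEq {p : ℕ} {b s : ℝ} {z : V} (hb : b ≠ 0) (hp0 : p ≠ 0)
    (h : bifEq p b (s, z) = 0) (i : ℕ × ℕ) :
    lam i * wave b z i + (b + ell z) ^ p * wave b z i = gpow (p + 1) (s, wave b z) i := by
  have hγ : gam p b ≠ 0 := by
    have : (p : ℝ) ≠ 0 := by exact_mod_cast hp0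
    unfold gam; positivity
  have h1 : Q z i = msym (gam p b) i * rhs p b (s, z) i := by
    have := congrArg (fun v : V => v i) (sub_eq_zero.1 h)
    simpa only [Minv, diag_apply] using this
  have h2 : rhs p b (s, z) i = gpow (p + 1) (s, wave b z) i
      - (b + ell z) ^ p * wave b z i - 2 * (wave b z i - (b + ell z) * e0 i) := rfl
  have h3 : wave b z i = (b + ell z) * e0 i + u1 i + Q z i := rfl
  have h4 : lam i * e0 i = 0 := by
    rw [e0_apply]
    split_ifs with h
    · subst h; simp [lam]
    · simp
  have h5 : (lam i - 2) * u1 i = 0 := by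
    rw [u1_apply]
    split_ifs with h
    · subst h; norm_num [lam]
    · simp
  have h6 : (lam i - 2) * Q z i = rhs p b (s, z) i := by
    by_cases hi : i = (1, 1)
    · have hl : lam i - 2 = 0 := by subst hi; norm_num [lam]
      have hQ : Q z i = 0 := by
        rw [Q_def]
        change z i - ell z * u1 i = 0
        rw [u1_apply, if_pos hi, hi]
        simp only [ell, smul_apply, coord_apply, smul_eq_mul]
        ring
      rw [hQ, msym, if_pos hi] at h1
      rw [hl, zero_mul]
      exact ((mul_eq_zero.1 h1.symm).resolve_left hγ).symm
    · have := one_le_abs_lam hi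
      have hne : lam i - 2 ≠ 0 := by
        intro h0; rw [h0] at this; norm_num at this
      rw [h1, msym, if_neg hi]
      field_simp
  linear_combination h6 + h2 + (lam i - 2) * h3 + (b + ell z) * h4 + h5

lemma wave_equation {p : ℕ} {a c : ℝ} (ha : |a| ≤ 1) (v : V)
    (h : ∀ i, lam i * v i + c * v i = gpow (p + 1) (a ^ 2, v) i) (x y : ℝ) :
    -lap (ser (cf a v)) x y + c * ser (cf a v) x y = ser (cf a v) x y ^ (p + 1) := by
  rw [lap_ser (rapid_cf ha v), ← ev_eq_ser ha, ← ev_gpow ha, ev_eq_ser, ev_eq_ser]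
  have hs := (rapid_cf ha v).summable_ser x y
  have hg := (rapid_cf ha (gpow (p + 1) (a ^ 2, v))).summable_ser x y
  unfold ser
  rw [← tsum_mul_left, ← eq_sub_iff_add_eq, ← hg.tsum_sub (hs.mul_left c)]
  refine tsum_congr fun i => ?_
  simp only [cf]
  linear_combination (par a i * wt i) * (cos (i.1 * x) * cos (i.2 * y)) * h i

/-- Second-order Taylor estimate on an interval to the right of `0`. -/
lemma taylor_bound {f : ℝ → ℝ} {f' : ℝ} (hf : ContDiffAt ℝ 2 f 0) (hf' : HasDerivAt f f' 0) :
    ∃ C, ∀ᶠ s in nhds (0 : ℝ), 0 ≤ s → |f s - (f 0 + f' * s)| ≤ C * s ^ 2 := by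
  obtain ⟨u, hu, hfu⟩ := hf.contDiffOn (m := 2) le_rfl (by simp)
  obtain ⟨ε, hε, hεu⟩ := Metric.nhds_basis_closedBall.mem_iff.1 hu
  have hsub : Set.Icc 0 ε ⊆ u := fun s hs => hεu (by
    rw [Metric.mem_closedBall, Real.dist_eq, sub_zero, abs_of_nonneg hs.1]; exact hs.2)
  obtain ⟨C, hC⟩ := exists_taylor_mean_remainder_bound (n := 1) hε.le (hfu.mono hsub)
  have hd : derivWithin f (Set.Icc 0 ε) 0 = f' :=
    hf'.hasDerivWithinAt.derivWithin (uniqueDiffOn_Icc hε 0 ⟨le_rfl, hε.le⟩)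
  refine ⟨C, ?_⟩
  filter_upwards [Iic_mem_nhds hε] with s hs hs0
  have := hC s ⟨hs0, hs⟩
  rw [taylorWithinEval_succ, taylor_within_zero_eval, iteratedDerivWithin_one, hd] at this
  simpa [mul_comm] using this

/-! ### The frequency coefficient -/

lemma pow_amplitude {p : ℕ} (hp : p ≠ 0) :
    (((2 / (p : ℝ)) ^ ((1 : ℝ) / (p : ℝ))) ^ p) = 2 / (p : ℝ) := by
  rw [one_div, Real.rpow_inv_natCast_pow (by positivity) hp]

lemma factorial_ratio (q : ℕ) :
    ((Nat.factorial (q + 2 + 1) : ℝ) / (Nat.factorial (q + 2 - 1) : ℝ)) = (q + 3) * (q + 2) ∧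
    ((Nat.factorial (q + 2 + 1) : ℝ) / (Nat.factorial (q + 2 - 2) : ℝ))
      = (q + 3) * (q + 2) * (q + 1) := by
  have h : (Nat.factorial q : ℝ) ≠ 0 := by positivity
  have h1 : q + 2 - 1 = q + 1 := by omega
  have h2 : q + 2 - 2 = q := by omega
  rw [h1, h2]
  simp only [Nat.factorial_succ]
  push_cast
  constructor <;> field_simp <;> ring

/-- The derivative at `0` of `(b + ell (g s)) ^ p` along the branch is the stated `c₂`. -/
lemma c2_eq {p : ℕ} (hp : 2 ≤ p) {b : ℝ} (hb : b = (2 / (p : ℝ)) ^ ((1 : ℝ) / (p : ℝ))) :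
    -(1/(p:ℝ)) *
      (((p:ℝ) * ((p:ℝ)+1) / 192) * ((2/(p:ℝ)) ^ ((2*((p:ℝ)-1))/(p:ℝ)))
          * ((Nat.factorial (p+1) : ℝ) / (Nat.factorial (p-1) : ℝ))
        + (3/32) * ((2/(p:ℝ)) ^ (((p:ℝ)-2)/(p:ℝ)))
          * ((Nat.factorial (p+1) : ℝ) / (Nat.factorial (p-2) : ℝ)))
      = p * b ^ (p - 1) * (gam p b *
        (9 / 16 * ((p + 1) * p * (p - 1) / 6 * b ^ p / b ^ 2)
          + ((p + 1) * p * b ^ p / b) * ((p + 1) * p / 2 * b ^ p / b) / 96)) := by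
  have hp1 : (0 : ℝ) < p := by exact_mod_cast (by omega : 0 < p)
  have hb0 : 0 < b := by rw [hb]; positivity
  have key : ∀ t : ℝ, (2 / (p : ℝ)) ^ (t / (p : ℝ)) = b ^ t := fun t => by
    rw [hb, ← Real.rpow_mul (by positivity)]; congr 1; ring
  have k1 : (2/(p:ℝ)) ^ ((2*((p:ℝ)-1))/(p:ℝ)) = (b ^ p / b) ^ 2 := by
    rw [key, mul_comm, Real.rpow_mul hb0.le, Real.rpow_sub hb0, Real.rpow_natCast, Real.rpow_one,
      Real.rpow_two]
  have k2 : (2/(p:ℝ)) ^ (((p:ℝ)-2)/(p:ℝ)) = b ^ p / b ^ 2 := by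
    rw [key, Real.rpow_sub hb0, Real.rpow_natCast, Real.rpow_two]
  have k3 : b ^ (p - 1) = b ^ p / b := by
    rw [eq_div_iff hb0.ne', ← pow_succ]; congr 1; omega
  rw [k1, k2, k3, gam]
  obtain ⟨q, rfl⟩ := Nat.exists_eq_add_of_le' hp
  rw [(factorial_ratio q).1, (factorial_ratio q).2]
  have : b ^ (q + 2) ≠ 0 := by positivity
  generalize b ^ (q + 2) = β at *
  push_cast at *
  field_simp
  ring

/-- Existence of small-amplitude periodic waves for an integer p ≥ 2, with the
first-order expansion `(2/p)^{1/p} + a cos x cos y` and frequency `c = 2/p + c₂ a² + O(a⁴)`. -/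
theorem small_amplitude_waves_p_ge_two (p : ℕ) (hp : 2 ≤ p) :
    let c₂ : ℝ := -(1/(p:ℝ)) *
      (((p:ℝ) * ((p:ℝ)+1) / 192) * ((2/(p:ℝ)) ^ ((2*((p:ℝ)-1))/(p:ℝ)))
          * ((Nat.factorial (p+1) : ℝ) / (Nat.factorial (p-1) : ℝ))
        + (3/32) * ((2/(p:ℝ)) ^ (((p:ℝ)-2)/(p:ℝ)))
          * ((Nat.factorial (p+1) : ℝ) / (Nat.factorial (p-2) : ℝ)))
    ∃ a₀ > (0:ℝ), ∃ C > (0:ℝ), ∀ a ∈ Set.Ioo (0:ℝ) a₀,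
      ∃ (c : ℝ) (φ : ℝ → ℝ → ℝ),
        Smooth2 φ ∧ DblPeriodic φ ∧ SymFun φ ∧
        (∀ x y : ℝ, -(lap φ x y) + c * φ x y = (φ x y)^(p+1)) ∧
        (∀ x y : ℝ,
          |φ x y - ((2/(p:ℝ)) ^ ((1:ℝ)/(p:ℝ)) + a * Real.cos x * Real.cos y)| ≤ C * a^2) ∧
        |c - (2/(p:ℝ) + c₂ * a^2)| ≤ C * a^4 := by
  intro c₂
  have hp0 : p ≠ 0 := by omega
  have hpR : (0 : ℝ) < p := by exact_mod_cast (by omega : 0 < p)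
  set b : ℝ := (2 / (p : ℝ)) ^ ((1 : ℝ) / (p : ℝ)) with hb
  have hb0 : 0 < b := by rw [hb]; positivity
  have hbp : b ^ p = 2 / p := pow_amplitude hp0
  obtain ⟨g, g1, g2, g3, g4⟩ := exists_branch hb0.ne' hp0 (by rw [hbp]; field_simp)
  -- the frequency along the branch, as a function of `s = a ^ 2`
  set f : ℝ → ℝ := fun s => (b + ell (g s)) ^ p with hf
  have f1 : ContDiffAt ℝ 2 f 0 :=
    (contDiffAt_const.add (ell.contDiff.contDiffAt.comp (0 : ℝ) g1)).pow p
  have f0 : f 0 = 2 / p := by simp only [hf, g2, map_zero, add_zero, hbp]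
  have f2 : HasDerivAt f c₂ 0 := by
    have h := (g4.const_add b).fun_pow p
    have e : c₂ = _ := c2_eq hp hb
    rw [e]
    simpa only [g2, map_zero, add_zero] using h
  obtain ⟨C₁, hC₁⟩ := taylor_bound f1 f2
  obtain ⟨C₂, hC₂⟩ := ((g1.differentiableAt (by norm_num)).hasDerivAt.isBigO_sub).bound
  obtain ⟨ε, hε, hall⟩ := Metric.eventually_nhds_iff.1 (g3.and (hC₁.and hC₂))
  refine ⟨min 1 ε, lt_min one_pos hε, |C₁| + (‖ell‖ + ‖Q‖) * |C₂| + 1, by positivity, ?_⟩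
  rintro a ⟨ha0, ha1⟩
  have ha : |a| ≤ 1 := by rw [abs_of_pos ha0]; exact (ha1.trans_le (min_le_left _ _)).le
  have has : dist (a ^ 2) 0 < ε := by
    rw [Real.dist_eq, sub_zero, abs_of_nonneg (sq_nonneg a)]
    have h1 := ha1.trans_le (min_le_left _ _)
    have h2 := ha1.trans_le (min_le_right _ _)
    nlinarith
  obtain ⟨h1, h2, h3⟩ := hall has
  rw [g2, sub_zero, sub_zero, Real.norm_eq_abs, abs_of_nonneg (sq_nonneg a)] at h3
  set z := g (a ^ 2)
  refine ⟨f (a ^ 2), ser (cf a (wave b z)), smooth_ser (rapid_cf ha _), periodic_ser _,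
    sym_ser _, wave_equation ha _ (modes_of_bifEq hb0.ne' hp0 h1), fun x y => ?_, ?_⟩
  · rw [← ev_eq_ser ha, wave]
    simp only [map_add, map_smul, ev_e0, ev_u1, smul_eq_mul, mul_one]
    have e1 : |ell z| ≤ ‖ell‖ * ‖z‖ := ell.le_opNorm z
    have e2 : |ev a ha x y (Q z)| ≤ ‖Q‖ * ‖z‖ := (abs_ev_le ha x y _).trans (Q.le_opNorm z)
    have e3 : ‖z‖ ≤ |C₂| * a ^ 2 := h3.trans (by gcongr; exact le_abs_self _)
    calc |b + ell z + a * cos x * cos y + ev a ha x y (Q z) - (b + a * cos x * cos y)|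
        = |ell z + ev a ha x y (Q z)| := by congr 1; ring
      _ ≤ ‖ell‖ * ‖z‖ + ‖Q‖ * ‖z‖ := (abs_add_le _ _).trans (add_le_add e1 e2)
      _ = (‖ell‖ + ‖Q‖) * ‖z‖ := by ring
      _ ≤ (‖ell‖ + ‖Q‖) * (|C₂| * a ^ 2) := by gcongr
      _ ≤ (|C₁| + (‖ell‖ + ‖Q‖) * |C₂| + 1) * a ^ 2 := by
        have : 0 ≤ (|C₁| + 1) * a ^ 2 := by positivity
        linarith
  · have h4 := h2 (sq_nonneg a)
    rw [f0] at h4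
    calc |f (a ^ 2) - (2 / (p : ℝ) + c₂ * a ^ 2)| ≤ C₁ * (a ^ 2) ^ 2 := h4
      _ = C₁ * a ^ 4 := by ring
      _ ≤ (|C₁| + (‖ell‖ + ‖Q‖) * |C₂| + 1) * a ^ 4 := by
        have h5 : 0 ≤ (‖ell‖ + ‖Q‖) * |C₂| := by positivity
        have h6 := le_abs_self C₁
        gcongr
        linarith
end
end
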